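/- (Strong duality for the restricted first pair of programs.) Under Assumption (A), for every ε ∈ (0,t0) there exist a (D_{1,ε})-admissible measure μ_{1,ε} and a (P_{1,ε})-admissible measure λ_{1,ε} such that ∫ g dμ_{1,ε} = sup{∫ g dμ : μ (D_{1,ε})-admissible} = inf{λ(Ω_ε) : λ (P_{1,ε})-admissible} = λ_{1,ε}(Ω_ε), and the complementary slackness conditions hold: r_{μ_{1,ε}}(t, b(t)) = 1 for λ_{1,ε}-almost every t ∈ Ω_ε, and ∫_{Ω_ε} r_θ(t,b(t)) λ_{1,ε}(dt) = g(θ) for μ_{1,ε}-almost every θ ∈ [2b(0),∞). -/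

import Mathlib

open MeasureTheory Set Filter
open scoped ENNReal NNReal Topology

noncomputable def rTheta (θ t x : ℝ) : ℝ := Real.exp (-θ ^ 2 / (2 * t) + θ * x / t)

noncomputable def rMu (μ : Measure ℝ) (t x : ℝ) : ℝ≥0∞ :=
  ∫⁻ θ, ENNReal.ofReal (rTheta θ t x) ∂μ

/-- `(D_{1,ε})`-admissibility. -/
def D1epsAdm (b : ℝ → ℝ) (t0 ε : ℝ) (μ : Measure ℝ) : Prop :=
  IsFiniteMeasure μ ∧ μ (Set.Ici (2 * b 0))ᶜ = 0 ∧
    ∀ t ∈ Set.Icc ε t0, rMu μ t (b t) ≤ 1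

/-- `(P_{1,ε})`-admissibility. -/
def P1epsAdm (b : ℝ → ℝ) (t0 x0 ε : ℝ) (lam : Measure ℝ) : Prop :=
  IsFiniteMeasure lam ∧ lam (Set.Icc ε t0)ᶜ = 0 ∧
    ∀ θ ∈ Set.Ici (2 * b 0),
      ENNReal.ofReal (rTheta θ t0 x0) ≤ ∫⁻ t, ENNReal.ofReal (rTheta θ t (b t)) ∂lam

/-!
Write `w θ = r_θ(t₀, b t₀)` and `s = 1 / t`. Dividing both programs by `w` turns the kernel into
`φ θ s = exp (-(s - s₀) θ² / 2 + θ (c s - c s₀))` with `c s = s b(1 / s)` and `s₀ = 1 / t₀`, and the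
objective into `exp (-δ θ)` with `δ > 0`. Now everything extends continuously to the one-point
compactification of `[2 b(0), ∞)`, where Hahn-Banach and Riesz-Markov give optimal measures
`ν` and `λ` without a duality gap. Undoing the normalisation needs `∫ 1 / w dν < ∞`, and this holds
because `ν` has bounded support.

Otherwise, slackness holds at arbitrarily large `θ`. As `exp (-δ θ) → 0`, `λ` has no atom at `s₀`,
but it charges every right neighbourhood of `s₀`, because away from `s₀` the kernel has Gaussian
decay in `θ`. So `F s = ∫ φ θ s ν(dθ)` equals `1` for some `s` arbitrarily close to `s₀`. It
satisfies the one-sided Cauchy estimates `(-1)ᵏ F⁽ᵏ⁾ ≥ -A Cᵏ k!` up to `s₀`, and with Rolle's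
theorem they force `F = 1` on `(s₀, ∞)`. On the other hand, slackness in `θ` is an equation between
entire functions, so `ν` has no mass just above `2 b(0)`. Letting `s → ∞` in `F s = 1`, the part of
`ν` above `2 b(0)` is exponentially small in `s`, while the rest is analytic in `1 / s`. Hence `ν`
is concentrated at `2 b(0)` after all, a contradiction.
-/

section CompactDuality

variable {X Y : Type*} [TopologicalSpace X] [MeasurableSpace Y]

theorem exists_finite_measure_integral_eq [CompactSpace X] [T2Space X] [MeasurableSpace X]
    [BorelSpace X] (L : C(X, ℝ) →ₗ[ℝ] ℝ) (hL : ∀ f, 0 ≤ f → 0 ≤ L f) :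
    ∃ ν : Measure X, IsFiniteMeasure ν ∧ ∀ f : C(X, ℝ), ∫ x, f x ∂ν = L f := by
  let T : CompactlySupportedContinuousMap X ℝ →ₗ[ℝ] ℝ :=
    { toFun := fun f ↦ L f.toContinuousMap
      map_add' := fun f g ↦ (congrArg L rfl).trans (map_add L f.toContinuousMap g.toContinuousMap)
      map_smul' := fun c f ↦ (congrArg L rfl).trans (map_smul L c f.toContinuousMap) }
  let Λ := PositiveLinearMap.mk₀ T fun f hf ↦ hL f.toContinuousMap hf
  exact ⟨RealRMK.rieszMeasure Λ, ⟨isCompact_univ.measure_lt_top⟩, fun f ↦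
    RealRMK.integral_rieszMeasure Λ (CompactlySupportedContinuousMap.continuousMapEquiv f)⟩

/-- The finite measures `λ` on `Y` that are feasible for the covering program
`∫ k(x, y) λ(dy) ≥ u(x)`, `x ∈ X`. -/
def coveringMeasures (k : X → Y → ℝ≥0) (u : C(X, ℝ)) : Set (FiniteMeasure Y) :=
  {lam | ∀ x, ENNReal.ofReal (u x) ≤ ∫⁻ y, k x y ∂(lam : Measure Y)}

/-- The value of the covering program with right-hand side `u`. It is sublinear in `u`, so
Hahn-Banach produces the solutions of the dual program. -/
noncomputable def coveringValue (k : X → Y → ℝ≥0) (u : C(X, ℝ)) : ℝ :=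
  sInf ((fun lam : FiniteMeasure Y ↦ (lam.mass : ℝ)) '' coveringMeasures k u)

variable {k : X → Y → ℝ≥0} {u v : C(X, ℝ)}

theorem coveringValue_nonneg : 0 ≤ coveringValue k u :=
  Real.sInf_nonneg (by rintro _ ⟨lam, -, rfl⟩; exact lam.mass.coe_nonneg)

theorem coveringValue_le {lam : FiniteMeasure Y} (h : lam ∈ coveringMeasures k u) :
    coveringValue k u ≤ lam.mass :=
  csInf_le ⟨0, by rintro _ ⟨lam, -, rfl⟩; exact lam.mass.coe_nonneg⟩ (mem_image_of_mem _ h)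

theorem coveringValue_eq_zero_of_nonpos (hu : u ≤ 0) : coveringValue k u = 0 := by
  refine le_antisymm ?_ coveringValue_nonneg
  have h : (0 : FiniteMeasure Y) ∈ coveringMeasures k u := fun x ↦ by
    exact (ENNReal.ofReal_of_nonpos (hu x)).trans_le zero_le
  simpa using coveringValue_le h

theorem dirac_mem_coveringMeasures [MeasurableSingletonClass Y] {y : Y} {c : ℝ≥0}
    (h : ∀ x, u x ≤ c * k x y) :
    c • (diracProba y).toFiniteMeasure ∈ coveringMeasures k u := fun x ↦ by
  rw [FiniteMeasure.toMeasure_smul, lintegral_smul_measure]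
  change _ ≤ c • ∫⁻ z, k x z ∂(Measure.dirac y)
  rw [lintegral_dirac]
  exact ENNReal.ofReal_le_of_le_toReal (h x)

theorem add_mem_coveringMeasures {lam rho : FiniteMeasure Y} (hl : lam ∈ coveringMeasures k u)
    (hr : rho ∈ coveringMeasures k v) : lam + rho ∈ coveringMeasures k (u + v) := fun x ↦ by
  rw [FiniteMeasure.toMeasure_add, lintegral_add_measure]
  exact ENNReal.ofReal_add_le.trans (add_le_add (hl x) (hr x))

theorem smul_mem_coveringMeasures {lam : FiniteMeasure Y} (hl : lam ∈ coveringMeasures k u)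
    (c : ℝ≥0) : c • lam ∈ coveringMeasures k ((c : ℝ) • u) := fun x ↦ by
  rw [FiniteMeasure.toMeasure_smul, lintegral_smul_measure, ContinuousMap.smul_apply, smul_eq_mul,
    ENNReal.ofReal_mul c.coe_nonneg, ENNReal.ofReal_coe_nnreal]
  exact mul_le_mul_right (hl x) (c : ℝ≥0∞)

theorem coveringMeasures_nonempty [CompactSpace X] [MeasurableSingletonClass Y] {y₀ : Y}
    (hk : Continuous fun x ↦ k x y₀) (hpos : ∀ x, 0 < k x y₀) (u : C(X, ℝ)) :
    (coveringMeasures k u).Nonempty := by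
  have hcont : Continuous fun x ↦ (u x).toNNReal / k x y₀ :=
    (continuous_real_toNNReal.comp u.continuous).div₀ hk fun x ↦ (hpos x).ne'
  obtain ⟨c, hc⟩ := (isCompact_range hcont).bddAbove
  refine ⟨_, dirac_mem_coveringMeasures (y := y₀) (c := c) fun x ↦ ?_⟩
  have h : (u x).toNNReal ≤ c * k x y₀ := (div_le_iff₀ (hpos x)).1 (hc (mem_range_self x))
  exact_mod_cast Real.toNNReal_le_iff_le_coe.1 h

theorem coveringValue_add_le (hne : ∀ u : C(X, ℝ), (coveringMeasures k u).Nonempty) :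
    coveringValue k (u + v) ≤ coveringValue k u + coveringValue k v := by
  refine le_of_forall_pos_le_add fun ε hε ↦ ?_
  obtain ⟨_, ⟨lam, hlam, rfl⟩, hl⟩ := Real.lt_sInf_add_pos ((hne u).image fun l ↦ (l.mass : ℝ))
    (half_pos hε)
  obtain ⟨_, ⟨rho, hrho, rfl⟩, hr⟩ := Real.lt_sInf_add_pos ((hne v).image fun l ↦ (l.mass : ℝ))
    (half_pos hε)
  have h := coveringValue_le (add_mem_coveringMeasures hlam hrho)
  have hmass : (lam + rho).mass = lam.mass + rho.mass := by simp [FiniteMeasure.mass]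
  rw [hmass, NNReal.coe_add] at h
  unfold coveringValue at *
  linarith

theorem coveringValue_smul_le (hne : ∀ u : C(X, ℝ), (coveringMeasures k u).Nonempty) (c : ℝ≥0) :
    coveringValue k ((c : ℝ) • u) ≤ c * coveringValue k u := by
  rw [coveringValue, coveringValue, ← smul_eq_mul, ← Real.sInf_smul_of_nonneg c.coe_nonneg]
  refine le_csInf ((hne u).image _).smul_set ?_
  rintro _ ⟨_, ⟨lam, hlam, rfl⟩, rfl⟩
  refine (coveringValue_le (smul_mem_coveringMeasures hlam c)).trans_eq ?_
  simp [FiniteMeasure.mass]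

theorem coveringValue_smul (hne : ∀ u : C(X, ℝ), (coveringMeasures k u).Nonempty) {c : ℝ}
    (hc : 0 < c) : coveringValue k (c • u) = c * coveringValue k u := by
  lift c to ℝ≥0 using hc.le
  refine (coveringValue_smul_le hne c).antisymm ?_
  have h := coveringValue_smul_le hne (u := (c : ℝ) • u) c⁻¹
  rwa [smul_smul, NNReal.coe_inv, inv_mul_cancel₀ hc.ne', one_smul, ← div_eq_inv_mul,
    le_div_iff₀' hc] at h

theorem isClosed_coveringMeasures [TopologicalSpace Y] [CompactSpace Y] [OpensMeasurableSpace Y]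
    (hk : ∀ x, 0 < u x → Continuous (k x)) : IsClosed (coveringMeasures k u) := by
  rw [coveringMeasures, ofPred_forall]
  refine isClosed_iInter fun x ↦ ?_
  rcases le_or_gt (u x) 0 with hx | hx
  · simp [ENNReal.ofReal_of_nonpos hx]
  · let f := BoundedContinuousFunction.mkOfCompact (⟨k x, hk x hx⟩ : C(Y, ℝ≥0))
    refine isClosed_le continuous_const (continuous_iff_continuousAt.2 fun lam ↦ ?_)
    exact FiniteMeasure.tendsto_iff_forall_lintegral_tendsto.1 tendsto_id f

theorem exists_mem_coveringMeasures_mass_eq [TopologicalSpace Y] [CompactSpace Y] [T2Space Y]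
    [BorelSpace Y] (hk : ∀ x, 0 < u x → Continuous (k x)) (hne : (coveringMeasures k u).Nonempty) :
    ∃ lam ∈ coveringMeasures k u, (lam.mass : ℝ) = coveringValue k u := by
  obtain ⟨rho, hrho⟩ := hne
  have hcompact := (isCompact_setOfPred_finiteMeasure_le_of_compactSpace Y rho.mass).inter_right
    (isClosed_coveringMeasures hk)
  obtain ⟨lam, ⟨hle, hlam⟩, hmin⟩ := hcompact.exists_isMinOn ⟨rho, le_refl rho.mass, hrho⟩
    FiniteMeasure.continuous_mass.continuousOn
  refine ⟨lam, hlam, le_antisymm (le_csInf ⟨_, mem_image_of_mem _ hrho⟩ ?_) (coveringValue_le hlam)⟩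
  rintro _ ⟨sig, hsig, rfl⟩
  rcases le_total sig.mass rho.mass with h | h
  · exact_mod_cast hmin ⟨h, hsig⟩
  · exact_mod_cast hle.trans h

theorem exists_linearMap_le_coveringValue (hne : ∀ u : C(X, ℝ), (coveringMeasures k u).Nonempty)
    (g : C(X, ℝ)) :
    ∃ L : C(X, ℝ) →ₗ[ℝ] ℝ, (∀ u, L u ≤ coveringValue k u) ∧ L g = coveringValue k g := by
  have hzero : coveringValue k (0 : C(X, ℝ)) = 0 := coveringValue_eq_zero_of_nonpos le_rfl
  rcases eq_or_ne g 0 with rfl | hg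
  · exact ⟨0, fun u ↦ coveringValue_nonneg, hzero.symm⟩
  let f : C(X, ℝ) →ₗ.[ℝ] ℝ := LinearPMap.mkSpanSingleton g (coveringValue k g) hg
  have hf : ∀ w : f.domain, f w ≤ coveringValue k w := by
    rintro ⟨w, hw⟩
    obtain ⟨c, rfl⟩ := Submodule.mem_span_singleton.1 hw
    rw [LinearPMap.mkSpanSingleton'_apply, smul_eq_mul]
    rcases le_or_gt c 0 with hc | hc
    · exact (mul_nonpos_of_nonpos_of_nonneg hc coveringValue_nonneg).trans coveringValue_nonneg
    · exact (coveringValue_smul hne hc).ge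
  obtain ⟨L, hLf, hL⟩ := exists_extension_of_le_sublinear f (coveringValue k)
    (fun c hc u ↦ coveringValue_smul hne hc) (fun u v ↦ coveringValue_add_le hne) hf
  refine ⟨L, hL, ?_⟩
  rw [hLf ⟨g, Submodule.mem_span_singleton_self g⟩]
  exact LinearPMap.mkSpanSingleton_apply ℝ _ hg _

theorem lintegral_coe_eq_ofReal_integral [CompactSpace X] [MeasurableSpace X] [BorelSpace X]
    (f : C(X, ℝ≥0)) (ν : Measure X) [IsFiniteMeasure ν] :
    ∫⁻ x, f x ∂ν = ENNReal.ofReal (∫ x, (f x : ℝ) ∂ν) := by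
  have hint : Integrable (fun x ↦ (f x : ℝ)) ν :=
    (NNReal.continuous_coe.comp f.continuous).integrable_of_hasCompactSupport
      (HasCompactSupport.of_compactSpace _)
  simp [ofReal_integral_eq_lintegral_ofReal hint (ae_of_all _ fun x ↦ (f x).coe_nonneg)]

theorem exists_optimal_measures_of_compact [CompactSpace X] [T2Space X] [MeasurableSpace X]
    [BorelSpace X] [TopologicalSpace Y] [CompactSpace Y] [T2Space Y] [BorelSpace Y]
    (hkX : ∀ y, Continuous fun x ↦ k x y)
    (g : C(X, ℝ≥0)) (hkY : ∀ x, 0 < g x → Continuous (k x)) {y₀ : Y} (hpos : ∀ x, 0 < k x y₀) :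
    ∃ (ν : Measure X) (lam : Measure Y), IsFiniteMeasure ν ∧ IsFiniteMeasure lam ∧
      (∀ y, ∫⁻ x, k x y ∂ν ≤ 1) ∧ (∀ x, g x ≤ ∫⁻ y, k x y ∂lam) ∧
      lam univ = ∫⁻ x, g x ∂ν := by
  have hne := coveringMeasures_nonempty (hkX y₀) hpos
  let toReal (f : C(X, ℝ≥0)) : C(X, ℝ) := ⟨fun x ↦ f x, NNReal.continuous_coe.comp f.continuous⟩
  obtain ⟨lam, hlam, hmass⟩ := exists_mem_coveringMeasures_mass_eq (u := toReal g)
    (fun x hx ↦ hkY x (NNReal.coe_pos.1 hx)) (hne _)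
  obtain ⟨L, hL, hLg⟩ := exists_linearMap_le_coveringValue hne (toReal g)
  have hLpos (f : C(X, ℝ)) (hf : 0 ≤ f) : 0 ≤ L f := by
    have h := (hL (-f)).trans_eq (coveringValue_eq_zero_of_nonpos (neg_nonpos.2 hf))
    rwa [map_neg, neg_nonpos] at h
  obtain ⟨ν, hν, hνL⟩ := exists_finite_measure_integral_eq L hLpos
  have hlint (f : C(X, ℝ≥0)) : ∫⁻ x, f x ∂ν = ENNReal.ofReal (L (toReal f)) := by
    rw [lintegral_coe_eq_ofReal_integral, ← hνL]; rfl
  refine ⟨ν, lam, hν, inferInstance, fun y ↦ ?_, fun x ↦ by simpa [toReal] using hlam x, ?_⟩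
  · have hdirac := coveringValue_le <| dirac_mem_coveringMeasures (k := k) (c := 1) (y := y)
      (u := toReal ⟨_, hkX y⟩) fun x ↦ by simp [toReal]
    refine (hlint ⟨_, hkX y⟩).trans_le (ENNReal.ofReal_le_one.2 ((hL _).trans (hdirac.trans_eq ?_)))
    rw [one_smul, ProbabilityMeasure.mass_toFiniteMeasure, NNReal.coe_one]
  · rw [hlint, hLg, ← hmass, ENNReal.ofReal_coe_nnreal, FiniteMeasure.ennreal_mass]

end CompactDuality

section OnePointCompactification

variable {X Y : Type*} [TopologicalSpace X] [T2Space X] [LocallyCompactSpace X]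
  [MeasurableSpace X] [BorelSpace X] [TopologicalSpace Y] [CompactSpace Y] [T2Space Y]
  [MeasurableSpace Y] [BorelSpace Y]

/-- The extension of `f : X → A` to the one-point compactification with value `a` at `∞`. -/
def onePointExtend {X A : Type*} (f : X → A) (a : A) : OnePoint X → A := fun x ↦ x.elim a f

omit [LocallyCompactSpace X] [MeasurableSpace X] [BorelSpace X] in
theorem continuous_onePointExtend {A : Type*} [TopologicalSpace A] {f : X → A} {a : A}
    (hf : Continuous f) (hlim : Tendsto f (cocompact X) (𝓝 a)) :
    Continuous (onePointExtend f a) :=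
  (OnePoint.continuous_iff _).2 ⟨by simpa [onePointExtend] using hlim, by
    simpa [onePointExtend] using hf⟩

theorem exists_optimal_measures {k : X → Y → ℝ≥0} {l : Y → ℝ≥0} {g : X → ℝ≥0}
    (hkX : ∀ y, Continuous fun x ↦ k x y)
    (hkl : ∀ y, Tendsto (fun x ↦ k x y) (cocompact X) (𝓝 (l y)))
    (hkY : ∀ x, Continuous (k x)) (hg : Continuous g) (hg₀ : Tendsto g (cocompact X) (𝓝 0))
    {y₀ : Y} (hpos : ∀ x, 0 < k x y₀) (hlpos : 0 < l y₀) :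
    ∃ (ν : Measure X) (lam : Measure Y), IsFiniteMeasure ν ∧ IsFiniteMeasure lam ∧
      (∀ y, ∫⁻ x, k x y ∂ν ≤ 1) ∧ (∀ x, g x ≤ ∫⁻ y, k x y ∂lam) ∧
      lam univ = ∫⁻ x, g x ∂ν := by
  let _ : MeasurableSpace (OnePoint X) := borel _
  have : BorelSpace (OnePoint X) := ⟨rfl⟩
  let kbar (x : OnePoint X) (y : Y) : ℝ≥0 := onePointExtend (fun x ↦ k x y) (l y) x
  let gbar : C(OnePoint X, ℝ≥0) := ⟨onePointExtend g 0, continuous_onePointExtend hg hg₀⟩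
  obtain ⟨ν, lam, hν, hlam, hpack, hcover, hval⟩ := exists_optimal_measures_of_compact
    (k := kbar) (fun y ↦ continuous_onePointExtend (hkX y) (hkl y)) gbar
    (OnePoint.forall.2 ⟨fun h ↦ absurd h (lt_irrefl 0), fun x _ ↦ hkY x⟩)
    (y₀ := y₀) (OnePoint.forall.2 ⟨hlpos, hpos⟩)
  have hemb : MeasurableEmbedding ((↑) : X → OnePoint X) :=
    OnePoint.isOpenEmbedding_coe.measurableEmbedding
  have hlint (f : OnePoint X → ℝ≥0∞) : ∫⁻ x : X, f x ∂(ν.comap (↑)) =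
      ∫⁻ x in range ((↑) : X → OnePoint X), f x ∂ν := by
    rw [← hemb.lintegral_map, hemb.map_comap]
  refine ⟨ν.comap (↑), lam, inferInstance, hlam, fun y ↦ ?_, fun x ↦ hcover x, ?_⟩
  · exact (hlint fun x ↦ kbar x y).trans_le ((setLIntegral_le_lintegral _ _).trans (hpack y))
  · refine hval.trans (.trans ?_ (hlint fun x ↦ gbar x).symm)
    exact (setLIntegral_eq_of_support_subset (OnePoint.forall.2
      ⟨fun h ↦ (h rfl).elim, fun x _ ↦ mem_range_self x⟩)).symm

end OnePointCompactification

section WeakDuality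

variable {X Y : Type*} [MeasurableSpace X] [MeasurableSpace Y] {ν : Measure X} {lam : Measure Y}
  {K : X → Y → ℝ≥0∞} {g : X → ℝ≥0∞}

theorem lintegral_le_measure_univ_of_feasible [SFinite ν] [SFinite lam]
    (hK : AEMeasurable (Function.uncurry K) (ν.prod lam))
    (hν : ∀ᵐ y ∂lam, ∫⁻ x, K x y ∂ν ≤ 1) (hlam : ∀ᵐ x ∂ν, g x ≤ ∫⁻ y, K x y ∂lam) :
    ∫⁻ x, g x ∂ν ≤ lam univ :=
  calc ∫⁻ x, g x ∂ν ≤ ∫⁻ x, ∫⁻ y, K x y ∂lam ∂ν := lintegral_mono_ae hlam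
    _ = ∫⁻ y, ∫⁻ x, K x y ∂ν ∂lam := lintegral_lintegral_swap hK
    _ ≤ ∫⁻ _, 1 ∂lam := lintegral_mono_ae hν
    _ = lam univ := lintegral_one

theorem complementary_slackness [SFinite ν] [IsFiniteMeasure lam]
    (hK : AEMeasurable (Function.uncurry K) (ν.prod lam))
    (hν : ∀ᵐ y ∂lam, ∫⁻ x, K x y ∂ν ≤ 1) (hlam : ∀ᵐ x ∂ν, g x ≤ ∫⁻ y, K x y ∂lam)
    (hgap : lam univ ≤ ∫⁻ x, g x ∂ν) :
    (∀ᵐ y ∂lam, ∫⁻ x, K x y ∂ν = 1) ∧ ∀ᵐ x ∂ν, ∫⁻ y, K x y ∂lam = g x := by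
  have hswap := lintegral_lintegral_swap hK
  have hle : ∫⁻ y, ∫⁻ x, K x y ∂ν ∂lam ≤ lam univ := by simpa using lintegral_mono_ae hν
  have hge := lintegral_mono_ae hlam
  constructor
  · refine ae_eq_of_ae_le_of_lintegral_le hν (hle.trans_lt (measure_lt_top _ _)).ne
      aemeasurable_const ?_
    rw [lintegral_one]
    exact (hgap.trans hge).trans hswap.le
  · refine (ae_eq_of_ae_le_of_lintegral_le hlam ?_ hK.lintegral_prod_right' ?_).mono
      fun x hx ↦ hx.symm
    · exact (hge.trans_lt ((hswap.le.trans hle).trans_lt (measure_lt_top _ _))).ne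
    · exact hswap.le.trans (hle.trans hgap)

end WeakDuality

section Vanishing

open Nat

variable {p q : ℝ}

theorem frequently_eq_zero_of_hasDerivAt {g g' : ℝ → ℝ} (hpq : p < q)
    (hg : ∀ s ∈ Ioo p q, HasDerivAt g (g' s) s) (hz : ∃ᶠ s in 𝓝[>] p, g s = 0) :
    ∃ᶠ s in 𝓝[>] p, g' s = 0 := by
  rw [(nhdsGT_basis p).frequently_iff] at hz ⊢
  intro r hr
  obtain ⟨y, hy, hy0⟩ := hz (min r q) (lt_min hr hpq)
  obtain ⟨x, hx, hx0⟩ := hz y hy.1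
  have hsub : Icc x y ⊆ Ioo p q := Icc_subset_Ioo hx.1 (hy.2.trans_le (min_le_right _ _))
  obtain ⟨ξ, hξ, hξ0⟩ := exists_hasDerivAt_eq_zero hx.2
    (HasDerivAt.continuousOn fun w hw ↦ hg w (hsub hw)) (hx0.trans hy0.symm)
    fun w hw ↦ hg w (hsub (Ioo_subset_Icc_self hw))
  exact ⟨ξ, ⟨hx.1.trans hξ.1, hξ.2.trans (hy.2.trans_le (min_le_left _ _))⟩, hξ0⟩

theorem nonneg_of_frequently_nonneg_of_deriv_nonneg {g g' : ℝ → ℝ}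
    (hg : ∀ s ∈ Ioo p q, HasDerivAt g (g' s) s) (hg' : ∀ s ∈ Ioo p q, 0 ≤ g' s)
    (hz : ∃ᶠ s in 𝓝[>] p, 0 ≤ g s) : ∀ s ∈ Ioo p q, 0 ≤ g s := by
  intro s hs
  have hmono : MonotoneOn g (Ioo p q) := by
    refine monotoneOn_of_deriv_nonneg (convex_Ioo p q) (HasDerivAt.continuousOn hg) ?_ ?_ <;>
      rw [interior_Ioo]
    · exact fun w hw ↦ (hg w hw).differentiableAt.differentiableWithinAt
    · exact fun w hw ↦ (hg w hw).deriv ▸ hg' w hw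
  obtain ⟨z, hz, hz0⟩ := (nhdsGT_basis p).frequently_iff.1 hz s hs.1
  exact hz0.trans (hmono ⟨hz.1, hz.2.trans hs.2⟩ hs hz.2.le)

theorem taylor_lower_bound_of_frequently_eq_zero (hpq : p < q) {M : ℝ} (hM : 0 ≤ M) (n : ℕ)
    {f : ℕ → ℝ → ℝ} (hf : ∀ k, ∀ s ∈ Ioo p q, HasDerivAt (f k) (f (k + 1) s) s)
    (hz : ∃ᶠ s in 𝓝[>] p, f 0 s = 0) (hn : ∀ s ∈ Ioo p q, -M ≤ f n s) :
    ∀ s ∈ Ioo p q, -(M * (s - p) ^ n / n !) ≤ f 0 s := by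
  induction n generalizing f with
  | zero => simpa using hn
  | succ n ih =>
    have hderiv (s : ℝ) : HasDerivAt (fun s ↦ M * (s - p) ^ (n + 1) / (n + 1)!)
        (M * (s - p) ^ n / n !) s := by
      refine ((((hasDerivAt_id s).sub_const p).pow (n + 1)).const_mul M |>.div_const _).congr_deriv
        ?_
      have : (n ! : ℝ) ≠ 0 := by positivity
      push_cast [factorial_succ]
      field_simp
      simp
    have hf₁ := ih (f := fun k ↦ f (k + 1)) (fun k ↦ hf (k + 1))
      (frequently_eq_zero_of_hasDerivAt hpq (hf 0) hz) hn
    have hnonneg := nonneg_of_frequently_nonneg_of_deriv_nonneg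
      (fun s hs ↦ (hf 0 s hs).add (hderiv s)) (fun s hs ↦ neg_le_iff_add_nonneg.1 (hf₁ s hs)) <| by
        refine (hz.and_eventually self_mem_nhdsWithin).mono fun s ⟨hs0, hs⟩ ↦ ?_
        have : 0 ≤ s - p := sub_nonneg.2 (le_of_lt hs)
        simp only [Pi.add_apply, hs0, zero_add]
        positivity
    exact fun s hs ↦ neg_le_iff_add_nonneg.2 (hnonneg s hs)

theorem eq_zero_near_of_frequently_eq_zero {f : ℕ → ℝ → ℝ} (hpq : p < q)
    (hf : ∀ k, ∀ s ∈ Ioo p q, HasDerivAt (f k) (f (k + 1) s) s) {A C : ℝ} (hA : 0 ≤ A)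
    (hC : 0 < C) (hlow : ∀ k, ∀ s ∈ Ioo p q, -(A * C ^ k * k !) ≤ (-1) ^ k * f k s)
    (hz : ∃ᶠ s in 𝓝[>] p, f 0 s = 0) {s : ℝ} (hs : s ∈ Ioo p q) (hCs : C * (s - p) < 1) :
    f 0 s = 0 := by
  have hterm (n : ℕ) : A * C ^ n * n ! * (s - p) ^ n / n ! = A * (C * (s - p)) ^ n := by
    rw [div_eq_iff (by positivity), mul_pow]
    ring
  have heven (m : ℕ) : -(A * (C * (s - p)) ^ (2 * m)) ≤ f 0 s := by
    rw [← hterm]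
    exact taylor_lower_bound_of_frequently_eq_zero hpq (by positivity) _ hf hz
      (fun w hw ↦ by simpa using hlow (2 * m) w hw) s hs
  have hodd (m : ℕ) : f 0 s ≤ A * (C * (s - p)) ^ (2 * m + 1) := by
    rw [← hterm, ← neg_le_neg_iff]
    exact taylor_lower_bound_of_frequently_eq_zero (f := fun k w ↦ -f k w) hpq (by positivity) _
      (fun k w hw ↦ (hf k w hw).neg) (by simpa using hz)
      (fun w hw ↦ by simpa [pow_succ] using hlow (2 * m + 1) w hw) s hs
  have hlim : Tendsto (fun n ↦ A * (C * (s - p)) ^ n) atTop (𝓝 0) := by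
    simpa using (tendsto_pow_atTop_nhds_zero_of_lt_one
      (mul_nonneg hC.le (sub_nonneg.2 hs.1.le)) hCs).const_mul A
  have htwo : Tendsto (fun m : ℕ ↦ 2 * m) atTop atTop := tendsto_id.const_mul_atTop' two_pos
  refine le_antisymm ?_ ?_
  · exact ge_of_tendsto' (hlim.comp ((tendsto_add_atTop_nat 1).comp htwo)) hodd
  · exact le_of_tendsto' (by simpa using (hlim.comp htwo).neg) heven

theorem eq_zero_of_frequently_eq_zero {f : ℕ → ℝ → ℝ}
    (hf : ∀ k, ∀ s ∈ Ioo p q, HasDerivAt (f k) (f (k + 1) s) s) {A C : ℝ} (hA : 0 ≤ A)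
    (hC : 0 < C) (hlow : ∀ k, ∀ s ∈ Ioo p q, -(A * C ^ k * k !) ≤ (-1) ^ k * f k s)
    (hz : ∃ᶠ s in 𝓝[>] p, f 0 s = 0) : ∀ s ∈ Ioo p q, f 0 s = 0 := by
  have hstep (n : ℕ) : ∀ s ∈ Ioo p q, C * (s - p) < n / 2 → f 0 s = 0 := by
    induction n with
    | zero =>
      intro s hs hn
      have := mul_pos hC (sub_pos.2 hs.1)
      norm_num at hn
      linarith
    | succ n ih =>
      intro s hs hn
      rcases lt_or_ge (C * (s - p)) 1 with h | h
      · exact eq_zero_near_of_frequently_eq_zero (hs.1.trans hs.2) hf hA hC hlow hz hs h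
      obtain ⟨p', hp'⟩ : ∃ p', C * (s - p') = 1 / 2 := ⟨s - 1 / 2 / C, by field_simp; ring⟩
      have hpp' : p < p' := by nlinarith
      have hp's : p' < s := by nlinarith
      have hsub : Ioo p' q ⊆ Ioo p q := Ioo_subset_Ioo_left hpp'.le
      have hp'n : C * (p' - p) < n / 2 := by push_cast at hn; linarith
      have hnear : ∀ᶠ w in 𝓝 p', C * (w - p) < n / 2 :=
        (continuous_const.mul (continuous_id.sub continuous_const)).continuousAt.eventually_lt
          continuousAt_const hp'n
      have hp'z : ∀ᶠ w in 𝓝[>] p', f 0 w = 0 := by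
        filter_upwards [Ioo_mem_nhdsGT (hp's.trans hs.2), nhdsWithin_le_nhds hnear] with w hw hwn
        exact ih w (hsub hw) hwn
      exact eq_zero_near_of_frequently_eq_zero (hp's.trans hs.2) (fun k w hw ↦ hf k w (hsub hw)) hA
        hC (fun k w hw ↦ hlow k w (hsub hw)) hp'z.frequently ⟨hp's, hs.2⟩ (by linarith)
  intro s hs
  obtain ⟨n, hn⟩ := exists_nat_gt (C * (s - p) * 2)
  exact hstep n s hs (by linarith)

end Vanishing

section ExpCoeffs

open Finset

theorem geom_sum_le_two {r : ℝ} (hr₀ : 0 ≤ r) (hr : r ≤ 1 / 2) (n : ℕ) :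
    ∑ i ∈ range n, r ^ i ≤ 2 :=
  calc ∑ i ∈ range n, r ^ i ≤ ∑ i ∈ range n, (1 / 2 : ℝ) ^ i := by gcongr
    _ ≤ ∑' i : ℕ, (1 / 2 : ℝ) ^ i :=
      summable_geometric_two.sum_le_tsum _ fun i _ ↦ by positivity
    _ = 2 := tsum_geometric_two

/-- `e` is the sequence of Taylor coefficients of a solution of `E' u = (x + ∑ hᵢ uⁱ) E u`, that is,
of a multiple of `exp (x u + ∑ hᵢ uⁱ⁺¹ / (i + 1))`. The linear rate `x` is kept apart from `h`
because it dominates in the estimates. -/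
def IsExpCoeffs (x : ℝ) (h e : ℕ → ℝ) : Prop :=
  ∀ k : ℕ, (k + 1) * e (k + 1) = x * e k + ∑ i ∈ range (k + 1), h i * e (k - i)

variable {x H S : ℝ} {h e : ℕ → ℝ}

theorem abs_sum_mul_le_of_geometric {B r : ℝ} (hB : 0 ≤ B) (hS : 0 ≤ S)
    (hr : 0 ≤ r) (hSr : S * r ≤ 1 / 2) (hh : ∀ i, |h i| ≤ H * S ^ i) {j : ℕ}
    (he : ∀ i ≤ j, |e (j - i)| ≤ B * r ^ i) :
    |∑ i ∈ range (j + 1), h i * e (j - i)| ≤ 2 * (H * B) := by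
  have hH : 0 ≤ H := by simpa using (abs_nonneg _).trans (hh 0)
  calc |∑ i ∈ range (j + 1), h i * e (j - i)|
      ≤ ∑ i ∈ range (j + 1), |h i * e (j - i)| := abs_sum_le_sum_abs _ _
    _ ≤ ∑ i ∈ range (j + 1), H * B * (S * r) ^ i := by
      refine sum_le_sum fun i hi ↦ ?_
      rw [abs_mul, mul_pow, mul_mul_mul_comm]
      exact mul_le_mul (hh i) (he i (mem_range_succ_iff.1 hi)) (abs_nonneg _) (by positivity)
    _ ≤ H * B * 2 := by
      rw [← mul_sum]
      exact mul_le_mul_of_nonneg_left (geom_sum_le_two (by positivity) hSr _) (by positivity)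
    _ = 2 * (H * B) := mul_comm _ _

namespace IsExpCoeffs

theorem abs_succ_mul_pow_le (hrec : IsExpCoeffs x h e) (hx : 0 ≤ x) (hS : 0 ≤ S)
    (hh : ∀ i, |h i| ≤ H * S ^ i) {ρ B : ℝ} (hρ : 0 < ρ) (hSρ : S * ρ ≤ 1 / 2) {j : ℕ}
    (he : ∀ i ≤ j, |e i| * ρ ^ i ≤ B) :
    (j + 1) * (|e (j + 1)| * ρ ^ (j + 1)) ≤ (x + 2 * H) * ρ * B := by
  have hB : 0 ≤ B := (by positivity : 0 ≤ |e 0| * ρ ^ 0).trans (he 0 j.zero_le)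
  have hback : ∀ i ≤ j, |e (j - i)| ≤ B / ρ ^ j * ρ ^ i := fun i hi ↦ by
    have := (le_div_iff₀ (by positivity)).2 (he (j - i) (j.sub_le i))
    rwa [← pow_sub_mul_pow ρ hi, div_mul_eq_mul_div, mul_div_mul_right _ _ (by positivity)]
  have hsum := abs_sum_mul_le_of_geometric (by positivity) hS hρ.le hSρ hh hback
  have hstep : (j + 1) * |e (j + 1)| ≤ (x + 2 * H) * (B / ρ ^ j) :=
    calc (j + 1) * |e (j + 1)| = |x * e j + ∑ i ∈ range (j + 1), h i * e (j - i)| := by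
          rw [← hrec j, abs_mul, abs_of_nonneg (by positivity : (0 : ℝ) ≤ j + 1)]
      _ ≤ |x * e j| + |∑ i ∈ range (j + 1), h i * e (j - i)| := abs_add_le _ _
      _ ≤ x * (B / ρ ^ j) + 2 * (H * (B / ρ ^ j)) := by
          rw [abs_mul, abs_of_nonneg hx]
          have := hback 0 j.zero_le
          rw [pow_zero, mul_one, Nat.sub_zero] at this
          gcongr
      _ = (x + 2 * H) * (B / ρ ^ j) := by ring
  calc (j + 1) * (|e (j + 1)| * ρ ^ (j + 1)) = (j + 1) * |e (j + 1)| * ρ ^ (j + 1) := by ring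
    _ ≤ (x + 2 * H) * (B / ρ ^ j) * ρ ^ (j + 1) := by gcongr
    _ = (x + 2 * H) * ρ * B := by
      rw [pow_succ]
      field_simp

theorem abs_mul_pow_le (hrec : IsExpCoeffs x h e) (hx : 0 ≤ x) (hS : 0 ≤ S)
    (hh : ∀ i, |h i| ≤ H * S ^ i) (he : 0 ≤ e 0) (j : ℕ) {ρ : ℝ} (hρ : 0 < ρ)
    (hSρ : S * ρ ≤ 1 / 2) : |e j| * ρ ^ j ≤ e 0 * Real.exp ((x + 2 * H) * ρ) := by
  have hH : 0 ≤ H := by simpa using (abs_nonneg _).trans (hh 0)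
  induction j using Nat.strong_induction_on generalizing ρ with
  | _ j ih =>
  rcases j with _ | j
  · simpa [abs_of_nonneg he] using le_mul_of_one_le_right he (Real.one_le_exp (by positivity))
  have hsmall {σ : ℝ} (hσ : 0 < σ) (hSσ : S * σ ≤ 1 / 2) (hLσ : (x + 2 * H) * σ ≤ j + 1) :
      |e (j + 1)| * σ ^ (j + 1) ≤ e 0 * Real.exp ((x + 2 * H) * σ) := by
    refine le_of_mul_le_mul_left ((hrec.abs_succ_mul_pow_le hx hS hh hσ hSσ fun i hi ↦
      ih i (by omega) hσ hSσ).trans ?_) (by positivity : (0 : ℝ) < j + 1)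
    gcongr
  rcases le_or_gt ((x + 2 * H) * ρ) (j + 1) with hρj | hρj
  · exact hsmall hρ hSρ hρj
  -- For larger radii use the bound at the optimal radius `σ` and
  -- `(ρ / σ) ^ n ≤ exp (n (ρ / σ - 1))`.
  have hL : 0 < x + 2 * H := pos_of_mul_pos_left ((by positivity : (0 : ℝ) < j + 1).trans hρj) hρ.le
  set σ : ℝ := (j + 1) / (x + 2 * H) with hσ
  have hσ₀ : 0 < σ := by positivity
  have hLσ : (x + 2 * H) * σ = j + 1 := mul_div_cancel₀ _ hL.ne'
  have hσρ : σ ≤ ρ := by rw [hσ, div_le_iff₀ hL]; linarith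
  have hratio : (ρ / σ) ^ (j + 1) ≤ Real.exp ((x + 2 * H) * ρ - (j + 1)) :=
    calc (ρ / σ) ^ (j + 1) ≤ Real.exp (ρ / σ - 1) ^ (j + 1) := by
          gcongr
          linarith [Real.add_one_le_exp (ρ / σ - 1)]
      _ = Real.exp ((x + 2 * H) * ρ - (j + 1)) := by
          rw [← Real.exp_nat_mul, ← hLσ]
          push_cast
          rw [← hLσ]
          congr 1
          field_simp
  calc |e (j + 1)| * ρ ^ (j + 1) = |e (j + 1)| * σ ^ (j + 1) * (ρ / σ) ^ (j + 1) := by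
        rw [mul_assoc, ← mul_pow, mul_div_cancel₀ _ hσ₀.ne']
    _ ≤ e 0 * Real.exp ((x + 2 * H) * σ) * Real.exp ((x + 2 * H) * ρ - (j + 1)) := by
        gcongr ?_ * ?_
        exact hsmall hσ₀ ((mul_le_mul_of_nonneg_left hσρ hS).trans hSρ) hLσ.le
    _ = e 0 * Real.exp ((x + 2 * H) * ρ) := by
        rw [mul_assoc, ← Real.exp_add, hLσ, add_sub_cancel]

theorem le_succ_of_back_le (hrec : IsExpCoeffs x h e) (hS : 0 < S)
    (hh : ∀ i, |h i| ≤ H * S ^ i) (hHx : 4 * H ≤ x) {j : ℕ} (hej : 0 ≤ e j)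
    (he : ∀ i ≤ j, |e (j - i)| ≤ e j * (1 / (2 * S)) ^ i) :
    x / 2 * e j ≤ (j + 1) * e (j + 1) := by
  have hsum := abs_sum_mul_le_of_geometric hej hS.le (by positivity)
    (le_of_eq (by field_simp)) hh he
  have := neg_le_of_abs_le hsum
  have := mul_le_mul_of_nonneg_right hHx hej
  rw [hrec j]
  linarith

/-- The two claims are proved together: growth at rate `x / 2` up to `j` makes the earlier
coefficients geometrically small compared with `e j`. -/
theorem nonneg_and_le_succ (hrec : IsExpCoeffs x h e) (hS : 0 < S)
    (hh : ∀ i, |h i| ≤ H * S ^ i) (hx : 0 < x) (hHx : 4 * H ≤ x) (he : 0 ≤ e 0) (j : ℕ)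
    (hj : 4 * S * j ≤ x) : 0 ≤ e j ∧ x / 2 * e j ≤ (j + 1) * e (j + 1) := by
  induction j using Nat.strong_induction_on with
  | _ j ih =>
  have hcast {i : ℕ} (hi : i ≤ j) : 4 * S * i ≤ x := by
    refine (mul_le_mul_of_nonneg_left (Nat.cast_le.2 hi) ?_).trans hj
    positivity
  have hnonneg : ∀ i ≤ j, 0 ≤ e i := by
    rintro (_ | i) hi
    · exact he
    · obtain ⟨h₁, h₂⟩ := ih i hi (hcast (by omega))
      exact nonneg_of_mul_nonneg_right ((by positivity : 0 ≤ x / 2 * e i).trans h₂) (by positivity)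
  have hstep : ∀ i < j, e i ≤ e (i + 1) * (1 / (2 * S)) := fun i hi ↦ by
    have hgrow := (ih i hi (hcast hi.le)).2
    have hi1 : 4 * S * (i + 1) ≤ x := by exact_mod_cast hcast hi
    have := mul_le_mul_of_nonneg_right hi1 (hnonneg (i + 1) hi)
    rw [mul_one_div, le_div_iff₀ (by positivity)]
    nlinarith
  refine ⟨hnonneg j le_rfl, hrec.le_succ_of_back_le hS hh hHx (hnonneg j le_rfl) fun i hi ↦ ?_⟩
  rw [abs_of_nonneg (hnonneg _ (j.sub_le i))]
  induction i with
  | zero => simp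
  | succ i ihi =>
    have := hstep (j - (i + 1)) (by omega)
    rw [show j - (i + 1) + 1 = j - i by omega] at this
    rw [pow_succ, ← mul_assoc]
    exact this.trans (mul_le_mul_of_nonneg_right (ihi (by omega)) (by positivity))

variable {θ : ℝ}

theorem abs_mul_pow_le_exp_sq (hrec : IsExpCoeffs (θ ^ 2 / 2) h e) (hS : 0 ≤ S)
    (hh : ∀ i, |h i| ≤ θ * H * S ^ i) (he : 0 ≤ e 0) (j : ℕ) {ρ : ℝ} (hρ : 0 < ρ)
    (hSρ : S * ρ ≤ 1 / 2) :
    |e j| * ρ ^ j ≤ e 0 * Real.exp ((3 * (θ ^ 2 / 2) + H ^ 2) * ρ) := by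
  refine (hrec.abs_mul_pow_le (by positivity) hS hh he j hρ hSρ).trans ?_
  gcongr e 0 * Real.exp (?_ * ρ)
  linarith [two_mul_le_add_sq θ H]

end IsExpCoeffs

theorem exists_neg_mul_pow_le_of_isExpCoeffs (hH : 0 ≤ H) (hS : 0 < S) :
    ∃ C > 0, ∀ θ > 0, ∀ h e, IsExpCoeffs (θ ^ 2 / 2) h e → (∀ i, |h i| ≤ θ * H * S ^ i) →
      0 ≤ e 0 → ∀ k : ℕ, -(e 0 * C ^ k) ≤ e k := by
  obtain ⟨M, hM⟩ : ∃ M, M = 32 * H ^ 2 + 4 * S := ⟨_, rfl⟩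
  refine ⟨2 * S * Real.exp ((3 * M + H ^ 2) * (1 / (2 * S))), by positivity,
    fun θ hθ h e hrec hh he k ↦ ?_⟩
  by_cases hlarge : 8 * H ≤ θ ∧ 4 * S * k ≤ θ ^ 2 / 2
  · have := (hrec.nonneg_and_le_succ hS hh (by positivity) (by nlinarith) he k hlarge.2).1
    refine le_trans (neg_nonpos.2 ?_) this
    positivity
  rcases k.eq_zero_or_pos with rfl | hk
  · simpa using neg_le_self he
  have hk1 : (1 : ℝ) ≤ k := Nat.one_le_cast.2 hk
  have hx : θ ^ 2 / 2 ≤ M * k := by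
    rw [hM, add_mul]
    rcases not_and_or.1 hlarge with hθH | hkx
    · nlinarith [sq_nonneg H, mul_pos hS (one_pos.trans_le hk1)]
    · nlinarith [sq_nonneg H]
  have hbound := hrec.abs_mul_pow_le_exp_sq hS.le hh he k (ρ := 1 / (2 * S)) (by positivity)
    (le_of_eq (by field_simp))
  rw [one_div, inv_pow, ← div_eq_mul_inv, div_le_iff₀ (by positivity)] at hbound
  refine (neg_le_neg (hbound.trans ?_)).trans (neg_abs_le _)
  calc e 0 * Real.exp ((3 * (θ ^ 2 / 2) + H ^ 2) * (2 * S)⁻¹) * (2 * S) ^ k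
      ≤ e 0 * Real.exp (k * ((3 * M + H ^ 2) * (1 / (2 * S)))) * (2 * S) ^ k := by
        rw [one_div, ← mul_assoc]
        gcongr
        nlinarith [sq_nonneg H]
    _ = e 0 * (2 * S * Real.exp ((3 * M + H ^ 2) * (1 / (2 * S)))) ^ k := by
        rw [Real.exp_nat_mul, mul_pow _ (Real.exp _)]
        ring

end ExpCoeffs

section CauchyEstimates

open Nat

variable {𝕜 E F : Type*} [NontriviallyNormedField 𝕜] [NormedAddCommGroup E] [NormedSpace 𝕜 E]
  [NormedAddCommGroup F] [NormedSpace 𝕜 F]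

theorem exists_nnnorm_changeOrigin_mul_pow_le (p : FormalMultilinearSeries 𝕜 E F) {r : ℝ≥0}
    (hr : (r + r : ℝ≥0∞) < p.radius) :
    ∃ T : ℝ≥0, ∀ y : E, ‖y‖₊ ≤ r → ∀ i, ‖p.changeOrigin y i‖₊ * r ^ i ≤ T := by
  have hsum := p.changeOriginSeries_summable_aux₁ hr
  have hsum_i := (NNReal.summable_sigma.1 hsum).1
  refine ⟨∑' s : Σ k l : ℕ, { s : Finset (Fin (k + l)) // s.card = l },
    ‖p (s.1 + s.2.1)‖₊ * r ^ s.2.1 * r ^ s.1, fun y hy i ↦ ?_⟩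
  have hyR : (‖y‖₊ : ℝ≥0∞) < p.radius := by
    refine lt_of_le_of_lt ?_ hr
    exact (ENNReal.coe_le_coe.2 hy).trans le_self_add
  have hle (s : Σ l : ℕ, { s : Finset (Fin (i + l)) // s.card = l }) :
      ‖p (i + s.1)‖₊ * ‖y‖₊ ^ s.1 * r ^ i ≤ ‖p (i + s.1)‖₊ * r ^ s.1 * r ^ i := by gcongr
  calc ‖p.changeOrigin y i‖₊ * r ^ i
      ≤ (∑' s : Σ l : ℕ, { s : Finset (Fin (i + l)) // s.card = l },
          ‖p (i + s.1)‖₊ * ‖y‖₊ ^ s.1) * r ^ i := by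
        gcongr
        exact p.nnnorm_changeOrigin_le i hyR
    _ = ∑' s : Σ l : ℕ, { s : Finset (Fin (i + l)) // s.card = l },
          ‖p (i + s.1)‖₊ * ‖y‖₊ ^ s.1 * r ^ i := NNReal.tsum_mul_right _ _ |>.symm
    _ ≤ ∑' s : Σ l : ℕ, { s : Finset (Fin (i + l)) // s.card = l },
          ‖p (i + s.1)‖₊ * r ^ s.1 * r ^ i :=
        (NNReal.summable_of_le hle (hsum_i i)).tsum_le_tsum hle (hsum_i i)
    _ ≤ _ := NNReal.tsum_comp_le_tsum_of_inj hsum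
          (i := fun s : Σ l : ℕ, { s : Finset (Fin (i + l)) // s.card = l } ↦
            (⟨i, s⟩ : Σ k l : ℕ, { s : Finset (Fin (k + l)) // s.card = l }))
          (fun _ _ h ↦ by simpa using h)

variable [CompleteSpace F] {f : 𝕜 → F}

theorem exists_eventually_norm_iteratedDeriv_le {x : 𝕜} (hf : AnalyticAt 𝕜 f x) :
    ∃ H ≥ 0, ∃ S > 0, ∀ᶠ s in 𝓝 x, ∀ i, ‖iteratedDeriv i f s‖ ≤ H * S ^ i * i ! := by
  obtain ⟨p, R, hp⟩ := hf
  obtain ⟨q, hq0, hqR⟩ := ENNReal.lt_iff_exists_nnreal_btwn.1 hp.r_pos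
  have hr : ((q / 2 : ℝ≥0) + (q / 2 : ℝ≥0) : ℝ≥0∞) < R := by
    rwa [← ENNReal.coe_add, add_halves]
  obtain ⟨T, hT⟩ := exists_nnnorm_changeOrigin_mul_pow_le p (hr.trans_le hp.r_le)
  obtain ⟨r, hqr⟩ : ∃ r : ℝ≥0, r = q / 2 := ⟨_, rfl⟩
  rw [← hqr] at hr hT
  have hr0 : (0 : ℝ) < r := by
    rw [hqr]
    exact_mod_cast half_pos (ENNReal.coe_pos.1 hq0)
  refine ⟨T, T.2, (r : ℝ)⁻¹, inv_pos.2 hr0, ?_⟩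
  filter_upwards [Metric.ball_mem_nhds x hr0] with s hs i
  have hsr : ‖s - x‖₊ ≤ r := by exact_mod_cast (mem_ball_iff_norm.1 hs).le
  have hsR : (‖s - x‖₊ : ℝ≥0∞) < R :=
    (ENNReal.coe_le_coe.2 hsr).trans_lt (lt_of_le_of_lt le_self_add hr)
  have hseries := hp.changeOrigin hsR
  rw [add_sub_cancel] at hseries
  have hcoeff : ‖p.changeOrigin (s - x) i‖ * (r : ℝ) ^ i ≤ T := by exact_mod_cast hT _ hsr i
  rw [iteratedDeriv_eq_iteratedFDeriv, ← hseries.factorial_smul 1 i]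
  calc ‖i ! • p.changeOrigin (s - x) i fun _ ↦ 1‖
      ≤ i ! * ‖p.changeOrigin (s - x) i‖ := by
        refine norm_nsmul_le.trans (mul_le_mul_of_nonneg_left ?_ (by positivity))
        simpa only [norm_one, Finset.prod_const_one, mul_one] using
          (p.changeOrigin (s - x) i).le_opNorm fun _ ↦ 1
    _ ≤ i ! * (T * (r : ℝ)⁻¹ ^ i) := by
        gcongr
        rwa [inv_pow, ← div_eq_mul_inv, le_div_iff₀ (by positivity)]
    _ = T * (r : ℝ)⁻¹ ^ i * i ! := mul_comm _ _

theorem exists_norm_iteratedDeriv_le_of_isCompact {J : Set 𝕜} (hJ : IsCompact J)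
    (hf : AnalyticOnNhd 𝕜 f J) :
    ∃ H ≥ 0, ∃ S > 0, ∀ s ∈ J, ∀ i, ‖iteratedDeriv i f s‖ ≤ H * S ^ i * i ! := by
  refine hJ.induction_on (p := fun J ↦ ∃ H ≥ 0, ∃ S > 0, ∀ s ∈ J, ∀ i,
    ‖iteratedDeriv i f s‖ ≤ H * S ^ i * i !) ⟨0, le_rfl, 1, one_pos, by simp⟩ ?_ ?_ fun x hx ↦ ?_
  · rintro J₁ J₂ hJ ⟨H, hH, S, hS, h⟩
    exact ⟨H, hH, S, hS, fun s hs ↦ h s (hJ hs)⟩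
  · rintro J₁ J₂ ⟨H₁, hH₁, S₁, hS₁, h₁⟩ ⟨H₂, hH₂, S₂, hS₂, h₂⟩
    refine ⟨H₁ + H₂, by positivity, S₁ + S₂, by positivity, ?_⟩
    rintro s (hs | hs) i
    · refine (h₁ s hs i).trans ?_
      gcongr <;> linarith
    · refine (h₂ s hs i).trans ?_
      gcongr <;> linarith
  · obtain ⟨H, hH, S, hS, h⟩ := exists_eventually_norm_iteratedDeriv_le (hf x hx)
    exact ⟨_, mem_nhdsWithin_of_mem_nhds h, H, hH, S, hS, fun s hs ↦ hs⟩

end CauchyEstimates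

section ExpCoeffsOfDeriv

open Nat

theorem isExpCoeffs_of_deriv_eq {f g : ℝ → ℝ} {x s : ℝ} (hf : AnalyticAt ℝ f s)
    (hg : AnalyticAt ℝ g s) (hfg : deriv f =ᶠ[𝓝 s] fun u ↦ -x * f u + g u * f u) :
    IsExpCoeffs x (fun i ↦ (-1) ^ (i + 1) * (iteratedDeriv i g s / i !))
      (fun k ↦ (-1) ^ k * (iteratedDeriv k f s / k !)) := by
  intro k
  have hleibniz : iteratedDeriv (k + 1) f s = -x * iteratedDeriv k f s +
      ∑ i ∈ Finset.range (k + 1), k.choose i * iteratedDeriv i g s * iteratedDeriv (k - i) f s := by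
    rw [iteratedDeriv_succ', hfg.iteratedDeriv_eq,
      iteratedDeriv_fun_add (analyticAt_const.fun_mul hf).contDiffAt (hg.fun_mul hf).contDiffAt,
      iteratedDeriv_const_mul_field, iteratedDeriv_fun_mul hg.contDiffAt hf.contDiffAt]
  have hterm : ∀ i ∈ Finset.range (k + 1),
      (-1) ^ (i + 1) * (iteratedDeriv i g s / i !) *
        ((-1) ^ (k - i) * (iteratedDeriv (k - i) f s / (k - i)!)) =
      (-1) ^ (k + 1) / k ! *
        (k.choose i * iteratedDeriv i g s * iteratedDeriv (k - i) f s) := fun i hi ↦ by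
    have hik : i ≤ k := Finset.mem_range_succ_iff.1 hi
    rw [cast_choose ℝ hik, show k + 1 = (i + 1) + (k - i) by omega, pow_add]
    field_simp
    rw [pow_add, pow_succ]
    ring
  dsimp only
  rw [Finset.sum_congr rfl hterm, ← Finset.mul_sum, hleibniz, factorial_succ, pow_succ]
  push_cast
  field_simp
  ring

theorem IsExpCoeffs.measurable {α : Type*} [MeasurableSpace α] {x : α → ℝ} {h e : α → ℕ → ℝ}
    (hrec : ∀ a, IsExpCoeffs (x a) (h a) (e a)) (hx : Measurable x)
    (hh : ∀ i, Measurable fun a ↦ h a i) (he : Measurable fun a ↦ e a 0) (k : ℕ) :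
    Measurable fun a ↦ e a k := by
  induction k using Nat.strong_induction_on with
  | _ k ih =>
  rcases k with _ | k
  · exact he
  have hsucc : (fun a ↦ e a (k + 1)) = fun a ↦
      (x a * e a k + ∑ i ∈ Finset.range (k + 1), h a i * e a (k - i)) / (k + 1) :=
    funext fun a ↦ by rw [← hrec a k, mul_div_cancel_left₀ _ (by positivity)]
  rw [hsucc]
  exact ((hx.mul (ih k k.lt_succ_self)).add <| Finset.measurable_fun_sum _ fun i _ ↦
    (hh i).mul (ih (k - i) (by omega))).div_const _

end ExpCoeffsOfDeriv

section Kernel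

open Nat

/-- The quotient `r_θ(t, b t) / r_θ(t₀, b t₀)` in the inverse times `s = 1 / t` and `s₀ = 1 / t₀`,
where `c s = s * b (1 / s)`. -/
noncomputable def relKernel (c : ℝ → ℝ) (s₀ θ s : ℝ) : ℝ :=
  Real.exp (-(s - s₀) * (θ ^ 2 / 2) + θ * (c s - c s₀))

variable {c : ℝ → ℝ} {s₀ s₁ s θ : ℝ}

theorem relKernel_pos (c : ℝ → ℝ) (s₀ θ s : ℝ) : 0 < relKernel c s₀ θ s := Real.exp_pos _

theorem continuous_relKernel_left (c : ℝ → ℝ) (s₀ s : ℝ) :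
    Continuous fun θ ↦ relKernel c s₀ θ s := by
  unfold relKernel
  fun_prop

theorem analyticAt_relKernel (hc : AnalyticAt ℝ c s) (s₀ θ : ℝ) :
    AnalyticAt ℝ (relKernel c s₀ θ) s := by
  unfold relKernel
  fun_prop

theorem hasDerivAt_iteratedDeriv_relKernel (hc : AnalyticAt ℝ c s) (s₀ θ : ℝ) (k : ℕ) :
    HasDerivAt (iteratedDeriv k (relKernel c s₀ θ))
      (iteratedDeriv (k + 1) (relKernel c s₀ θ) s) s := by
  rw [iteratedDeriv_succ, iteratedDeriv_eq_iterate]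
  exact ((analyticAt_relKernel hc s₀ θ).iterated_deriv k).differentiableAt.hasDerivAt

theorem isExpCoeffs_relKernel (hc : AnalyticAt ℝ c s) (s₀ θ : ℝ) :
    IsExpCoeffs (θ ^ 2 / 2)
      (fun i ↦ (-1) ^ (i + 1) * (iteratedDeriv i (fun u ↦ θ * deriv c u) s / i !))
      (fun k ↦ (-1) ^ k * (iteratedDeriv k (relKernel c s₀ θ) s / k !)) := by
  refine isExpCoeffs_of_deriv_eq (analyticAt_relKernel hc s₀ θ) (analyticAt_const.mul hc.deriv) ?_
  filter_upwards [hc.eventually_analyticAt] with u hu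
  have hexp := (((((hasDerivAt_id u).sub_const s₀).neg).mul_const (θ ^ 2 / 2)).add
    ((hu.differentiableAt.hasDerivAt.sub_const (c s₀)).const_mul θ)).exp
  refine hexp.deriv.trans ?_
  simp only [relKernel, id, Pi.add_apply, Pi.neg_apply]
  ring

theorem measurable_iteratedDeriv_relKernel (hc : AnalyticAt ℝ c s) (s₀ : ℝ) (k : ℕ) :
    Measurable fun θ ↦ iteratedDeriv k (relKernel c s₀ θ) s := by
  have hcoeff := IsExpCoeffs.measurable (fun θ ↦ isExpCoeffs_relKernel hc s₀ θ) (by fun_prop)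
    (fun i ↦ by simp only [iteratedDeriv_const_mul_field]; fun_prop)
    (by simpa using (continuous_relKernel_left c s₀ s).measurable) k
  convert hcoeff.const_mul ((-1) ^ k * k !) using 2 with θ
  have hsign : ((-1 : ℝ) ^ k) ^ 2 = 1 := by rw [← pow_mul, mul_comm, pow_mul, neg_one_sq, one_pow]
  field_simp
  rw [hsign, mul_one]

theorem abs_expCoeff_le_of_iteratedDeriv_le {H S : ℝ} {i : ℕ} (hθ : 0 < θ)
    (h : ‖iteratedDeriv i (deriv c) s‖ ≤ H * S ^ i * i !) :
    |(-1) ^ (i + 1) * (iteratedDeriv i (fun u ↦ θ * deriv c u) s / i !)| ≤ θ * H * S ^ i := by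
  rw [iteratedDeriv_const_mul_field, abs_mul, abs_pow, abs_neg, abs_one, one_pow, one_mul, abs_div,
    Nat.abs_cast, div_le_iff₀ (by positivity), abs_mul, abs_of_pos hθ, mul_assoc, mul_assoc θ,
    ← mul_assoc H]
  gcongr
  exact h

theorem exists_neg_relKernel_mul_le_iteratedDeriv (hc : AnalyticOnNhd ℝ c (Icc s₀ s₁)) :
    ∃ C > 0, ∀ θ > 0, ∀ s ∈ Icc s₀ s₁, ∀ k : ℕ,
      -(relKernel c s₀ θ s * C ^ k * k !) ≤ (-1) ^ k * iteratedDeriv k (relKernel c s₀ θ) s := by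
  obtain ⟨H, hH, S, hS, hbound⟩ := exists_norm_iteratedDeriv_le_of_isCompact isCompact_Icc hc.deriv
  obtain ⟨C, hC, hlow⟩ := exists_neg_mul_pow_le_of_isExpCoeffs hH hS
  refine ⟨C, hC, fun θ hθ s hs k ↦ ?_⟩
  have hcoeff := hlow θ hθ _ _ (isExpCoeffs_relKernel (hc s hs) s₀ θ)
    (fun i ↦ abs_expCoeff_le_of_iteratedDeriv_le hθ (hbound s hs i))
    (by simpa using (relKernel_pos c s₀ θ s).le) k
  have hmul := mul_le_mul_of_nonneg_right hcoeff (k !).cast_nonneg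
  rw [mul_assoc ((-1) ^ k), div_mul_cancel₀ _ (by positivity), neg_mul] at hmul
  simpa using hmul

theorem exists_relKernel_le (hc : AnalyticOnNhd ℝ c (Icc s₀ s₁)) :
    ∃ K : ℝ, ∀ s ∈ Icc s₀ s₁, ∀ θ, relKernel c s₀ θ s ≤
      Real.exp ((s - s₀) * (K ^ 2 - θ ^ 2 / 4)) := by
  have hlip : LocallyLipschitzOn (Icc s₀ s₁) c := fun s hs ↦
    let ⟨K, t, ht, hK⟩ := (hc s hs).contDiffAt.exists_lipschitzOnWith
    ⟨K, t, mem_nhdsWithin_of_mem_nhds ht, hK⟩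
  obtain ⟨K, hK⟩ := hlip.exists_lipschitzOnWith_of_compact isCompact_Icc
  refine ⟨K, fun s hs θ ↦ Real.exp_le_exp.2 ?_⟩
  have hs₀ : 0 ≤ s - s₀ := sub_nonneg.2 hs.1
  have hcs : |c s - c s₀| ≤ K * (s - s₀) := by
    simpa [Real.dist_eq, abs_of_nonneg hs₀] using
      hK.dist_le_mul s hs s₀ (left_mem_Icc.2 (hs.1.trans hs.2))
  have hθ : θ * (c s - c s₀) ≤ |θ| * (K * (s - s₀)) :=
    (le_abs_self _).trans (abs_mul θ _ ▸ mul_le_mul_of_nonneg_left hcs (abs_nonneg θ))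
  nlinarith [mul_nonneg hs₀ (sq_nonneg (K - |θ| / 2)), sq_abs θ]

theorem exists_abs_iteratedDeriv_relKernel_le {σ : ℝ} (hσ : s₀ < σ)
    (hc : AnalyticOnNhd ℝ c (Icc s₀ s₁)) (k : ℕ) :
    ∃ A, ∀ θ > 0, ∀ s ∈ Icc σ s₁, |iteratedDeriv k (relKernel c s₀ θ) s| ≤ A := by
  obtain ⟨H, -, S, hS, hbound⟩ := exists_norm_iteratedDeriv_le_of_isCompact isCompact_Icc hc.deriv
  obtain ⟨K, hK⟩ := exists_relKernel_le hc
  obtain ⟨ρ, hρ, hρσ, hSρ⟩ : ∃ ρ > 0, ρ ≤ (σ - s₀) / 6 ∧ S * ρ ≤ 1 / 2 :=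
    ⟨min ((σ - s₀) / 6) (1 / (2 * S)), lt_min (by linarith) (by positivity), min_le_left _ _,
      (mul_le_mul_of_nonneg_left (min_le_right _ _) hS.le).trans_eq (by field_simp)⟩
  refine ⟨Real.exp ((s₁ - s₀) * K ^ 2 + H ^ 2 * ρ) / ρ ^ k * k !, fun θ hθ s hs ↦ ?_⟩
  have hs₀ : s ∈ Icc s₀ s₁ := ⟨hσ.le.trans hs.1, hs.2⟩
  have hcoeff := (isExpCoeffs_relKernel (hc s hs₀) s₀ θ).abs_mul_pow_le_exp_sq hS.le
    (fun i ↦ abs_expCoeff_le_of_iteratedDeriv_le hθ (hbound s hs₀ i))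
    (by simpa using (relKernel_pos c s₀ θ s).le) k hρ hSρ
  rw [← le_div_iff₀ (by positivity), abs_mul, abs_pow, abs_neg, abs_one, one_pow, one_mul, abs_div,
    Nat.abs_cast, div_le_iff₀ (by positivity)] at hcoeff
  refine hcoeff.trans ?_
  gcongr
  simp only [pow_zero, iteratedDeriv_zero, one_mul, factorial_zero, cast_one, div_one]
  calc relKernel c s₀ θ s * Real.exp ((3 * (θ ^ 2 / 2) + H ^ 2) * ρ)
      ≤ Real.exp ((s - s₀) * (K ^ 2 - θ ^ 2 / 4)) *
          Real.exp ((3 * (θ ^ 2 / 2) + H ^ 2) * ρ) := by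
        gcongr
        exact hK s hs₀ θ
    _ ≤ Real.exp ((s₁ - s₀) * K ^ 2 + H ^ 2 * ρ) := by
        rw [← Real.exp_add]
        refine Real.exp_le_exp.2 ?_
        nlinarith [mul_le_mul_of_nonneg_right hs.2 (sq_nonneg K), hs.1,
          mul_le_mul_of_nonneg_right (hρσ.trans (by linarith [hs.1] : _ ≤ (s - s₀) / 6))
            (sq_nonneg θ)]

variable {ν : Measure ℝ} [IsFiniteMeasure ν]

theorem hasDerivAt_integral_iteratedDeriv_relKernel (hc : AnalyticOnNhd ℝ c (Ici s₀))
    (hν : ∀ᵐ θ ∂ν, 0 < θ) (hs : s₀ < s) (k : ℕ) :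
    HasDerivAt (fun s ↦ ∫ θ, iteratedDeriv k (relKernel c s₀ θ) s ∂ν)
      (∫ θ, iteratedDeriv (k + 1) (relKernel c s₀ θ) s ∂ν) s := by
  have hmid : s₀ < (s₀ + s) / 2 := by linarith
  have hbound := exists_abs_iteratedDeriv_relKernel_le hmid
    (hc.mono (Icc_subset_Ici_self : Icc s₀ (s + 1) ⊆ _))
  obtain ⟨A, hA⟩ := hbound k
  obtain ⟨A', hA'⟩ := hbound (k + 1)
  have hnhds : Ioo ((s₀ + s) / 2) (s + 1) ∈ 𝓝 s := Ioo_mem_nhds (by linarith) (by linarith)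
  have hsub {u : ℝ} (hu : u ∈ Ioo ((s₀ + s) / 2) (s + 1)) : AnalyticAt ℝ c u :=
    hc u (hmid.trans hu.1).le
  have hmeas (j : ℕ) {u : ℝ} (hu : u ∈ Ioo ((s₀ + s) / 2) (s + 1)) :
      AEStronglyMeasurable (fun θ ↦ iteratedDeriv j (relKernel c s₀ θ) u) ν :=
    (measurable_iteratedDeriv_relKernel (hsub hu) s₀ j).aestronglyMeasurable
  have hs' := mem_of_mem_nhds hnhds
  refine (hasDerivAt_integral_of_dominated_loc_of_deriv_le
    (F' := fun s θ ↦ iteratedDeriv (k + 1) (relKernel c s₀ θ) s) (bound := fun _ ↦ A') hnhds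
    (mem_of_superset hnhds fun u hu ↦ hmeas k hu) ?_ (hmeas (k + 1) hs') ?_
    (integrable_const _) ?_).2
  · exact .of_bound (hmeas k hs') A (hν.mono fun θ hθ ↦ hA θ hθ s (Ioo_subset_Icc_self hs'))
  · exact hν.mono fun θ hθ u hu ↦ hA' θ hθ u (Ioo_subset_Icc_self hu)
  · exact ae_of_all _ fun θ u hu ↦ hasDerivAt_iteratedDeriv_relKernel (hsub hu) s₀ θ k

theorem exists_neg_mul_le_integral_iteratedDeriv_relKernel
    (hc : AnalyticOnNhd ℝ c (Icc s₀ s₁)) (hν : ∀ᵐ θ ∂ν, 0 < θ) :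
    ∃ A ≥ 0, ∃ C > 0, ∀ (k : ℕ), ∀ s ∈ Ioo s₀ s₁, -(A * C ^ k * k !) ≤
      (-1) ^ k * ∫ θ, iteratedDeriv k (relKernel c s₀ θ) s ∂ν := by
  obtain ⟨C, hC, hlow⟩ := exists_neg_relKernel_mul_le_iteratedDeriv hc
  obtain ⟨K, hK⟩ := exists_relKernel_le hc
  refine ⟨Real.exp ((s₁ - s₀) * K ^ 2) * ν.real univ, by positivity, C, hC, fun k s hs ↦ ?_⟩
  have hs' := Ioo_subset_Icc_self hs
  obtain ⟨A', hA'⟩ := exists_abs_iteratedDeriv_relKernel_le hs.1 hc k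
  have hint : Integrable (fun θ ↦ iteratedDeriv k (relKernel c s₀ θ) s) ν :=
    .of_bound (measurable_iteratedDeriv_relKernel (hc s hs') s₀ k).aestronglyMeasurable A'
      (hν.mono fun θ hθ ↦ hA' θ hθ s ⟨le_rfl, hs.2.le⟩)
  have hle : ∀ᵐ θ ∂ν, -(Real.exp ((s₁ - s₀) * K ^ 2) * C ^ k * k !) ≤
      (-1) ^ k * iteratedDeriv k (relKernel c s₀ θ) s := by
    filter_upwards [hν] with θ hθ
    refine le_trans (neg_le_neg ?_) (hlow θ hθ s hs' k)
    gcongr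
    refine (hK s hs' θ).trans (Real.exp_le_exp.2 ?_)
    nlinarith [mul_nonneg (sub_nonneg.2 hs'.1) (sq_nonneg θ),
      mul_le_mul_of_nonneg_right hs'.2 (sq_nonneg K)]
  have hmono := integral_mono_ae (integrable_const _) (hint.const_mul _) hle
  rw [integral_const, smul_eq_mul, integral_const_mul] at hmono
  linarith

theorem integral_relKernel_eq_one_of_frequently (hc : AnalyticOnNhd ℝ c (Ici s₀))
    (hν : ∀ᵐ θ ∂ν, 0 < θ) (hone : ∃ᶠ s in 𝓝[>] s₀, ∫ θ, relKernel c s₀ θ s ∂ν = 1)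
    (hs : s₀ < s) : ∫ θ, relKernel c s₀ θ s ∂ν = 1 := by
  obtain ⟨A, hA, C, hC, hlow⟩ := exists_neg_mul_le_integral_iteratedDeriv_relKernel
    (hc.mono (Icc_subset_Ici_self : Icc s₀ (s + 1) ⊆ _)) hν
  have hzero := eq_zero_of_frequently_eq_zero (p := s₀) (q := s + 1) (A := A + 1) (C := C)
    (f := fun k u ↦ (∫ θ, iteratedDeriv k (relKernel c s₀ θ) u ∂ν) - if k = 0 then 1 else 0)
    (fun k u hu ↦ by
      simpa using (hasDerivAt_integral_iteratedDeriv_relKernel hc hν hu.1 k).sub_const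
        (if k = 0 then 1 else 0))
    (by positivity) hC (fun k u hu ↦ ?_) (hone.mono fun u hu ↦ by simpa using sub_eq_zero.2 hu)
    s ⟨hs, lt_add_one s⟩
  · simpa [sub_eq_zero] using hzero
  · have hk := hlow k u hu
    have hpos : 0 ≤ C ^ k * k ! := by positivity
    rcases k with _ | k
    · simp only [pow_zero, factorial_zero, cast_one, mul_one, one_mul, if_true] at hk ⊢
      linarith
    · simp only [Nat.succ_ne_zero, if_false, sub_zero]
      linarith

end Kernel

section EntireTransform

variable {α : Type*} [MeasurableSpace α] {μ : Measure α} [IsFiniteMeasure μ] {A B : ℝ}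

theorem differentiable_integral_cexp_quadratic {f g : α → ℂ} (hf : AEStronglyMeasurable f μ)
    (hg : AEStronglyMeasurable g μ) (hfA : ∀ᵐ x ∂μ, ‖f x‖ ≤ A) (hgB : ∀ᵐ x ∂μ, ‖g x‖ ≤ B) :
    Differentiable ℂ fun z ↦ ∫ x, Complex.exp (z ^ 2 * f x + z * g x) ∂μ := by
  intro z₀
  set R := ‖z₀‖ + 1
  have hmeas (z : ℂ) : AEStronglyMeasurable (fun x ↦ Complex.exp (z ^ 2 * f x + z * g x)) μ :=
    Complex.continuous_exp.comp_aestronglyMeasurable ((hf.const_mul _).add (hg.const_mul _))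
  have hbound {z : ℂ} (hz : ‖z‖ ≤ R) {x : α} (hfx : ‖f x‖ ≤ A) (hgx : ‖g x‖ ≤ B) :
      ‖Complex.exp (z ^ 2 * f x + z * g x)‖ ≤ Real.exp (R ^ 2 * A + R * B) := by
    refine (Complex.norm_exp_le_exp_norm _).trans (Real.exp_le_exp.2 ((norm_add_le _ _).trans ?_))
    simp only [norm_mul, norm_pow]
    gcongr
  have hball {z : ℂ} (hz : z ∈ Metric.ball z₀ 1) : ‖z‖ ≤ R := by
    linarith [norm_le_norm_add_norm_sub z₀ z, mem_ball_iff_norm.1 hz, norm_sub_rev z z₀]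
  refine (hasDerivAt_integral_of_dominated_loc_of_deriv_le
    (F' := fun z x ↦ Complex.exp (z ^ 2 * f x + z * g x) * (2 * z * f x + g x))
    (bound := fun _ ↦ Real.exp (R ^ 2 * A + R * B) * (2 * R * A + B))
    (Metric.ball_mem_nhds z₀ one_pos) (.of_forall hmeas) ?_
    ((hmeas z₀).mul ((hf.const_mul _).add hg)) ?_ (integrable_const _) ?_).2.differentiableAt
  · refine .of_bound (hmeas z₀) (Real.exp (R ^ 2 * A + R * B)) ?_
    filter_upwards [hfA, hgB] with x hfx hgx
    exact hbound (by simp [R]) hfx hgx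
  · filter_upwards [hfA, hgB] with x hfx hgx z hz
    rw [norm_mul]
    refine mul_le_mul (hbound (hball hz) hfx hgx) ((norm_add_le _ _).trans ?_) (norm_nonneg _)
      (Real.exp_nonneg _)
    rw [norm_mul, norm_mul, Complex.norm_two]
    have := hball hz
    gcongr
  · refine ae_of_all _ fun x z _ ↦ ?_
    have hexponent : HasDerivAt (fun z ↦ z ^ 2 * f x + z * g x) (2 * z * f x + g x) z := by
      simpa using ((hasDerivAt_pow 2 z).mul_const (f x)).fun_add ((hasDerivAt_id z).mul_const (g x))
    exact hexponent.cexp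

theorem analyticAt_integral_exp_quadratic {f g : α → ℝ} (hf : AEStronglyMeasurable f μ)
    (hg : AEStronglyMeasurable g μ) (hfA : ∀ᵐ x ∂μ, ‖f x‖ ≤ A) (hgB : ∀ᵐ x ∂μ, ‖g x‖ ≤ B)
    (θ : ℝ) : AnalyticAt ℝ (fun θ ↦ ∫ x, Real.exp (θ ^ 2 * f x + θ * g x) ∂μ) θ := by
  have hcomplex := (differentiable_integral_cexp_quadratic (f := fun x ↦ f x) (g := fun x ↦ g x)
    (Complex.continuous_ofReal.comp_aestronglyMeasurable hf)
    (Complex.continuous_ofReal.comp_aestronglyMeasurable hg)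
    (hfA.mono fun _ h ↦ by rwa [Complex.norm_real])
    (hgB.mono fun _ h ↦ by rwa [Complex.norm_real])).analyticAt θ
  refine hcomplex.re_ofReal.congr (.of_forall fun θ ↦ ?_)
  dsimp only
  rw [← Complex.ofReal_re (∫ x, _ ∂μ), ← integral_complex_ofReal]
  push_cast
  rfl

theorem eventually_integral_exp_quadratic_ne {f g : α → ℝ} (hf : AEStronglyMeasurable f μ)
    (hg : AEStronglyMeasurable g μ) (hfA : ∀ᵐ x ∂μ, ‖f x‖ ≤ A) (hgB : ∀ᵐ x ∂μ, ‖g x‖ ≤ B)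
    {M δ : ℝ} (hM : ∃ᶠ θ in atBot, ∫ x, Real.exp (θ ^ 2 * f x + θ * g x) ∂μ ≤ M) (hδ : 0 < δ)
    (a : ℝ) :
    ∀ᶠ θ in 𝓝[≠] a, ∫ x, Real.exp (θ ^ 2 * f x + θ * g x) ∂μ ≠ Real.exp (-(δ * θ)) := by
  by_contra hfreq
  simp only [ne_eq, not_eventually, not_not] at hfreq
  have hexp : AnalyticOnNhd ℝ (fun θ ↦ Real.exp (-(δ * θ))) univ := fun θ _ ↦ by fun_prop
  have heq : EqOn (fun θ ↦ ∫ x, Real.exp (θ ^ 2 * f x + θ * g x) ∂μ) _ univ :=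
    AnalyticOnNhd.eqOn_of_preconnected_of_frequently_eq
      (fun θ _ ↦ analyticAt_integral_exp_quadratic hf hg hfA hgB θ) hexp isPreconnected_univ
      (mem_univ a) hfreq
  have hlim : Tendsto (fun θ : ℝ ↦ Real.exp (-(δ * θ))) atBot atTop :=
    Real.tendsto_exp_atTop.comp <| tendsto_neg_atBot_atTop.comp (tendsto_id.const_mul_atBot hδ)
  obtain ⟨θ, hle, hgt⟩ := (hM.and_eventually (hlim.eventually_gt_atTop M)).exists
  exact hgt.not_ge ((heq (mem_univ θ)).symm.le.trans hle)

end EntireTransform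

section SmallTime

open Asymptotics

theorem eventually_eq_zero_of_isBigO_exp {G : ℝ → ℝ} {κ : ℝ} (hG : AnalyticAt ℝ G 0)
    (hκ : 0 < κ) (hO : (fun s ↦ G s⁻¹) =O[atTop] fun s ↦ Real.exp (-κ * s)) :
    ∀ᶠ t in 𝓝 0, G t = 0 := by
  by_contra hne
  obtain ⟨n, h, hh, hh₀, hev⟩ := hG.exists_eventuallyEq_pow_smul_nonzero_iff.2 hne
  have hinv : Tendsto (fun s : ℝ ↦ s⁻¹) atTop (𝓝 0) := tendsto_inv_atTop_zero
  have hsmall : (fun s : ℝ ↦ h s⁻¹) =o[atTop] fun _ ↦ (1 : ℝ) := by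
    have hquot : (fun s ↦ s ^ n * G s⁻¹) =o[atTop] fun s : ℝ ↦ s ^ n * s ^ (-n : ℝ) :=
      (isBigO_refl _ _).mul_isLittleO (hO.trans_isLittleO (isLittleO_exp_neg_mul_rpow_atTop hκ _))
    refine hquot.congr' ?_ ?_
    · filter_upwards [hinv.eventually hev, eventually_gt_atTop 0] with s hs hs₀
      rw [hs, sub_zero, smul_eq_mul, inv_pow, mul_inv_cancel_left₀ (by positivity)]
    · filter_upwards [eventually_gt_atTop 0] with s hs₀
      rw [Real.rpow_neg hs₀.le, Real.rpow_natCast, mul_inv_cancel₀ (by positivity)]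
  exact hh₀ (tendsto_nhds_unique (hh.continuousAt.tendsto.comp hinv)
    ((isLittleO_one_iff ℝ).1 hsmall))

/-- The curve `b` in the coordinates `(s, y) = (1 / t, x / t)` of Brownian time inversion. -/
noncomputable def inverseTime (b : ℝ → ℝ) (s : ℝ) : ℝ :=
  s * b s⁻¹

variable {b : ℝ → ℝ} {s₀ : ℝ}

-- The factor `θ * (θ - 2 * b 0)` makes `2 * b 0` the smallest drift whose kernel is bounded at `∞`.
theorem relKernel_inverseTime (b : ℝ → ℝ) (s₀ θ : ℝ) {s : ℝ} (hs : s ≠ 0) :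
    relKernel (inverseTime b) s₀ θ s =
      Real.exp (-(θ * (θ - 2 * b 0) / 2) * s + θ * dslope b 0 s⁻¹ +
        (s₀ * θ ^ 2 / 2 - θ * inverseTime b s₀)) := by
  rw [relKernel, dslope_of_ne _ (inv_ne_zero hs), slope_def_field, inverseTime]
  congr 1
  field_simp
  ring

theorem analyticAt_dslope_self {𝕜 E : Type*} [NontriviallyNormedField 𝕜] [NormedAddCommGroup E]
    [NormedSpace 𝕜 E] {f : 𝕜 → E} {x : 𝕜} (hf : AnalyticAt 𝕜 f x) :
    AnalyticAt 𝕜 (dslope f x) x :=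
  let ⟨_, hp⟩ := hf
  hp.has_fpower_series_dslope_fslope.analyticAt

theorem exists_relKernel_inverseTime_le_exp_mul (hb : AnalyticAt ℝ b 0) (hb₀ : 0 < b 0) {η : ℝ}
    (hη : 0 < η) (s₀ : ℝ) : ∃ κ > 0, ∃ s₁ > s₀, ∃ A : ℝ, ∀ᶠ s in atTop, ∀ θ ≥ 2 * b 0 + η,
      relKernel (inverseTime b) s₀ θ s ≤
        A * Real.exp (-κ * s) * relKernel (inverseTime b) s₀ θ s₁ := by
  obtain ⟨C, hC⟩ : ∃ C, ∀ᶠ s in atTop, |dslope b 0 s⁻¹| ≤ C :=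
    ⟨|dslope b 0 0| + 1, ((analyticAt_dslope_self hb).continuousAt.abs.tendsto.comp
      tendsto_inv_atTop_zero).eventually_le_const (lt_add_one _)⟩
  obtain ⟨s₁, hC₁, hs₁, hs₁'⟩ :=
    (hC.and ((eventually_gt_atTop s₀).and (eventually_gt_atTop 0))).exists
  refine ⟨b 0 * η, by positivity, s₁, hs₁, Real.exp (b 0 * η * s₁ + 4 * b 0 * C), ?_⟩
  filter_upwards [hC, eventually_ge_atTop s₁, eventually_ge_atTop (s₁ + 4 * C / η)]
    with s hCs hs hsC θ hθ
  have hdecay : 0 ≤ η * (s - s₁) - 4 * C := by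
    rw [← sub_nonneg] at hsC
    calc 0 ≤ η * (s - (s₁ + 4 * C / η)) := by positivity
      _ = _ := by field_simp; ring
  rw [relKernel_inverseTime b s₀ θ (hs₁'.trans_le hs).ne',
    relKernel_inverseTime b s₀ θ hs₁'.ne', ← Real.exp_add, ← Real.exp_add, Real.exp_le_exp]
  have hq : θ * (dslope b 0 s⁻¹ - dslope b 0 s₁⁻¹) ≤ θ * (2 * C) := by
    gcongr
    · linarith
    · linarith [(abs_le.1 hCs).2, (abs_le.1 hC₁).1]
  have hθη : θ * (η * (s - s₁)) ≤ θ * (θ - 2 * b 0) * (s - s₁) := by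
    rw [← mul_assoc]
    exact mul_le_mul_of_nonneg_right (mul_le_mul_of_nonneg_left (by linarith) (by linarith))
      (sub_nonneg.2 hs)
  nlinarith [mul_le_mul_of_nonneg_right (by linarith : 2 * b 0 ≤ θ) hdecay]

variable {ν : Measure ℝ} {η : ℝ}

theorem exists_setIntegral_relKernel_isBigO_exp (hb : AnalyticAt ℝ b 0) (hb₀ : 0 < b 0)
    (hη : 0 < η) (hgap : ∀ᵐ θ ∂ν, θ = 2 * b 0 ∨ 2 * b 0 + η ≤ θ)
    (hint : ∀ s > s₀, Integrable (fun θ ↦ relKernel (inverseTime b) s₀ θ s) ν) :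
    ∃ κ > 0, (fun s ↦ ∫ θ in {2 * b 0}ᶜ, relKernel (inverseTime b) s₀ θ s ∂ν) =O[atTop]
      fun s ↦ Real.exp (-κ * s) := by
  obtain ⟨κ, hκ, s₁, hs₁, A, hA⟩ := exists_relKernel_inverseTime_le_exp_mul hb hb₀ hη s₀
  refine ⟨κ, hκ, .of_bound
    (A * ∫ θ in {2 * b 0}ᶜ, relKernel (inverseTime b) s₀ θ s₁ ∂ν) ?_⟩
  filter_upwards [hA, eventually_gt_atTop s₀] with s hs hs₀
  rw [Real.norm_of_nonneg (integral_nonneg fun θ ↦ (relKernel_pos _ _ _ _).le),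
    Real.norm_of_nonneg (Real.exp_nonneg _), mul_right_comm, ← integral_const_mul]
  refine integral_mono_ae (hint s hs₀).integrableOn ((hint s₁ hs₁).integrableOn.const_mul _) ?_
  filter_upwards [ae_restrict_of_ae hgap,
    ae_restrict_mem (measurableSet_singleton (2 * b 0)).compl] with θ hθ hne
  exact hs θ (hθ.resolve_left hne)

/- Apart from the contribution of the smallest drift `2 * b 0`, which is analytic in `t = 1 / s`
at `0`, all of the mass is exponentially small in `1 / t`. -/
theorem ae_eq_of_integral_relKernel_eq_one (hb : AnalyticAt ℝ b 0) (hb₀ : 0 < b 0) (hη : 0 < η)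
    (hgap : ∀ᵐ θ ∂ν, θ = 2 * b 0 ∨ 2 * b 0 + η ≤ θ)
    (hone : ∀ s > s₀, ∫ θ, relKernel (inverseTime b) s₀ θ s ∂ν = 1) :
    ∀ᵐ θ ∂ν, θ = 2 * b 0 := by
  set a := 2 * b 0
  have hint (s) (hs : s > s₀) : Integrable (fun θ ↦ relKernel (inverseTime b) s₀ θ s) ν :=
    .of_integral_ne_zero (by rw [hone s hs]; exact one_ne_zero)
  obtain ⟨κ, hκ, hO⟩ := exists_setIntegral_relKernel_isBigO_exp hb hb₀ hη hgap hint
  set G : ℝ → ℝ := fun t ↦ 1 - ν.real {a} *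
    Real.exp (a * dslope b 0 t + (s₀ * a ^ 2 / 2 - a * inverseTime b s₀))
  have hG : AnalyticAt ℝ G 0 := by
    have := analyticAt_dslope_self hb
    fun_prop
  have hGint : ∀ᶠ s in atTop, ∫ θ in {a}ᶜ, relKernel (inverseTime b) s₀ θ s ∂ν = G s⁻¹ := by
    filter_upwards [eventually_gt_atTop s₀, eventually_ne_atTop 0] with s hs hs₀
    have hadd := integral_add_compl (measurableSet_singleton a) (hint s hs)
    rw [hone s hs, integral_singleton, relKernel_inverseTime b s₀ a hs₀, sub_self] at hadd
    simp only [mul_zero, zero_div, neg_zero, zero_mul, zero_add, smul_eq_mul] at hadd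
    exact eq_sub_of_add_eq' hadd
  have hzero := eventually_eq_zero_of_isBigO_exp hG hκ (hO.congr' hGint .rfl)
  obtain ⟨s, hs, hGs, hGs₀⟩ := ((eventually_gt_atTop s₀).and
    (hGint.and (tendsto_inv_atTop_zero.eventually hzero))).exists
  rw [hGs₀, integral_eq_zero_iff_of_nonneg (fun θ ↦ (relKernel_pos _ _ _ _).le)
    (hint s hs).integrableOn, EventuallyEq,
    ae_restrict_iff' (measurableSet_singleton a).compl] at hGs
  exact hGs.mono fun θ hθ ↦ by_contra fun hne ↦ (relKernel_pos _ _ _ _).ne' (hθ hne)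

end SmallTime

section BoundedSupport

theorem integral_eq_of_lintegral_ofReal_eq {α : Type*} [MeasurableSpace α] {μ : Measure α}
    {f : α → ℝ} {r : ℝ} (hf : 0 ≤ᵐ[μ] f) (hfm : AEStronglyMeasurable f μ) (hr : 0 ≤ r)
    (h : ∫⁻ x, ENNReal.ofReal (f x) ∂μ = ENNReal.ofReal r) : ∫ x, f x ∂μ = r := by
  rw [integral_eq_lintegral_of_nonneg_ae hf hfm, h, ENNReal.toReal_ofReal hr]

variable {c : ℝ → ℝ} {s₀ s₁ δ : ℝ} {ν lam : Measure ℝ}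

theorem measure_singleton_eq_zero_of_frequently_lintegral_relKernel_le (hδ : 0 < δ)
    (hle : ∃ᶠ θ in atTop, ∫⁻ s, ENNReal.ofReal (relKernel c s₀ θ s) ∂lam ≤
      ENNReal.ofReal (Real.exp (-(δ * θ)))) : lam {s₀} = 0 := by
  have hlim : Tendsto (fun θ : ℝ ↦ ENNReal.ofReal (Real.exp (-(δ * θ)))) atTop (𝓝 0) := by
    rw [← ENNReal.ofReal_zero]
    exact ENNReal.tendsto_ofReal <| Real.tendsto_exp_neg_atTop_nhds_zero.comp
      (tendsto_id.const_mul_atTop hδ)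
  refine nonpos_iff_eq_zero.1 (ge_of_tendsto_of_frequently hlim (hle.mono fun θ hθ ↦ ?_))
  calc lam {s₀} = ∫⁻ s in {s₀}, ENNReal.ofReal (relKernel c s₀ θ s) ∂lam := by
        simp [relKernel]
    _ ≤ ∫⁻ s, ENNReal.ofReal (relKernel c s₀ θ s) ∂lam := setLIntegral_le_lintegral _ _
    _ ≤ _ := hθ

theorem aestronglyMeasurable_of_continuousOn_of_ae_mem {α E : Type*} [TopologicalSpace α]
    [MeasurableSpace α] [OpensMeasurableSpace α] [TopologicalSpace E]
    [TopologicalSpace.PseudoMetrizableSpace E] [SecondCountableTopologyEither α E]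
    {μ : Measure α} {f : α → E} {K : Set α} (hf : ContinuousOn f K) (hK : MeasurableSet K)
    (hμ : ∀ᵐ x ∂μ, x ∈ K) : AEStronglyMeasurable f μ :=
  Measure.restrict_eq_self_of_ae_mem hμ ▸ hf.aestronglyMeasurable hK

variable [IsFiniteMeasure lam]

/- A competitor `lam` supported away from `s₀` has Gaussian transform, hence cannot dominate the
exponential `e ^ (-δ θ)`. -/
theorem not_ae_mem_Icc_of_frequently_le_lintegral_relKernel (hc : AnalyticOnNhd ℝ c (Icc s₀ s₁))
    {σ : ℝ} (hσ : s₀ < σ) (hle : ∃ᶠ θ in atTop, ENNReal.ofReal (Real.exp (-(δ * θ))) ≤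
      ∫⁻ s, ENNReal.ofReal (relKernel c s₀ θ s) ∂lam) : ¬ ∀ᵐ s ∂lam, s ∈ Icc σ s₁ := by
  intro hlam
  obtain ⟨K, hK⟩ := exists_relKernel_le hc
  set D := (s₁ - s₀) * K ^ 2
  have hbound (θ : ℝ) : ∫⁻ s, ENNReal.ofReal (relKernel c s₀ θ s) ∂lam ≤
      ENNReal.ofReal (Real.exp (D - (σ - s₀) * (θ ^ 2 / 4)) * lam.real univ) := by
    rw [ENNReal.ofReal_mul (Real.exp_nonneg _), ofReal_measureReal, ← lintegral_const]
    refine lintegral_mono_ae (hlam.mono fun s hs ↦ ENNReal.ofReal_le_ofReal ?_)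
    refine (hK s ⟨hσ.le.trans hs.1, hs.2⟩ θ).trans (Real.exp_le_exp.2 ?_)
    nlinarith [mul_le_mul_of_nonneg_right hs.1 (sq_nonneg θ),
      mul_le_mul_of_nonneg_right hs.2 (sq_nonneg K)]
  have hlim : Tendsto (fun θ : ℝ ↦ Real.exp (D + θ * (δ - (σ - s₀) / 4 * θ)) * lam.real univ)
      atTop (𝓝 0) := by
    rw [← zero_mul (lam.real univ)]
    refine (Real.tendsto_exp_atBot.comp (tendsto_atBot_add_const_left _ _ ?_)).mul_const _
    refine tendsto_id.atTop_mul_atBot₀ (tendsto_atBot_add_const_left _ _ ?_)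
    exact tendsto_neg_atTop_atBot.comp (tendsto_id.const_mul_atTop (by linarith))
  obtain ⟨θ, hθ, hlt⟩ := (hle.and_eventually (hlim.eventually_lt_const one_pos)).exists
  have hexp := (ENNReal.ofReal_le_ofReal_iff (by positivity)).1 (hθ.trans (hbound θ))
  refine hlt.not_ge ?_
  calc 1 = Real.exp (δ * θ) * Real.exp (-(δ * θ)) := by
        rw [← Real.exp_add, add_neg_cancel, Real.exp_zero]
    _ ≤ Real.exp (δ * θ) * (Real.exp (D - (σ - s₀) * (θ ^ 2 / 4)) * lam.real univ) := by gcongr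
    _ = _ := by rw [← mul_assoc, ← Real.exp_add]; ring_nf

theorem frequently_integral_relKernel_eq_one (hc : AnalyticOnNhd ℝ c (Icc s₀ s₁))
    (hlam : ∀ᵐ s ∂lam, s ∈ Icc s₀ s₁) (hatom : lam {s₀} = 0)
    (hle : ∃ᶠ θ in atTop, ENNReal.ofReal (Real.exp (-(δ * θ))) ≤
      ∫⁻ s, ENNReal.ofReal (relKernel c s₀ θ s) ∂lam)
    (hslack : ∀ᵐ s ∂lam, ∫⁻ θ, ENNReal.ofReal (relKernel c s₀ θ s) ∂ν = 1) :
    ∃ᶠ s in 𝓝[>] s₀, ∫ θ, relKernel c s₀ θ s ∂ν = 1 := by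
  refine (nhdsGT_basis s₀).frequently_iff.2 fun σ hσ ↦ ?_
  by_contra! hne
  refine not_ae_mem_Icc_of_frequently_le_lintegral_relKernel hc hσ hle ?_
  filter_upwards [hlam, hslack, measure_eq_zero_iff_ae_notMem.1 hatom] with s hs hone hs₀
  refine ⟨not_lt.1 fun hsσ ↦ hne s ⟨hs.1.lt_of_ne' hs₀, hsσ⟩ ?_, hs.2⟩
  exact integral_eq_of_lintegral_ofReal_eq (ae_of_all _ fun θ ↦ (relKernel_pos _ _ _ _).le)
    (continuous_relKernel_left c s₀ s).aestronglyMeasurable zero_le_one (by simpa using hone)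

theorem frequently_integral_relKernel_le (hc : AnalyticOnNhd ℝ c (Icc s₀ s₁))
    (hlam : ∀ᵐ s ∂lam, s ∈ Icc s₀ s₁) :
    ∃ᶠ θ in atBot, ∫ s, relKernel c s₀ θ s ∂lam ≤ lam.real univ := by
  obtain ⟨K, hK⟩ := exists_relKernel_le hc
  refine (eventually_le_atBot (-(2 * |K|))).frequently.mono fun θ hθ ↦ ?_
  have hle : ∀ᵐ s ∂lam, ‖relKernel c s₀ θ s‖ ≤ 1 := hlam.mono fun s hs ↦ by
    rw [Real.norm_of_nonneg (relKernel_pos _ _ _ _).le]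
    refine (hK s hs θ).trans (Real.exp_le_one_iff.2 ?_)
    refine mul_nonpos_of_nonneg_of_nonpos (sub_nonneg.2 hs.1) ?_
    nlinarith [sq_abs K, abs_nonneg K]
  simpa using (le_abs_self _).trans (norm_integral_le_of_norm_le_const hle)

theorem eventually_integral_relKernel_ne (hc : AnalyticOnNhd ℝ c (Icc s₀ s₁))
    (hlam : ∀ᵐ s ∂lam, s ∈ Icc s₀ s₁) (hδ : 0 < δ) (a : ℝ) :
    ∀ᶠ θ in 𝓝[≠] a, ∫ s, relKernel c s₀ θ s ∂lam ≠ Real.exp (-(δ * θ)) := by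
  set f : ℝ → ℝ := fun s ↦ -(s - s₀) / 2
  set g : ℝ → ℝ := fun s ↦ c s - c s₀
  have hkernel (θ s : ℝ) : relKernel c s₀ θ s = Real.exp (θ ^ 2 * f s + θ * g s) := by
    rw [relKernel]
    congr 1
    ring
  have hf : ContinuousOn f (Icc s₀ s₁) := by fun_prop
  have hg : ContinuousOn g (Icc s₀ s₁) := hc.continuousOn.sub continuousOn_const
  obtain ⟨A, hA⟩ := isCompact_Icc.exists_bound_of_continuousOn hf
  obtain ⟨B, hB⟩ := isCompact_Icc.exists_bound_of_continuousOn hg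
  have hM := frequently_integral_relKernel_le hc hlam
  simp only [hkernel] at hM ⊢
  exact eventually_integral_exp_quadratic_ne
    (aestronglyMeasurable_of_continuousOn_of_ae_mem hf measurableSet_Icc hlam)
    (aestronglyMeasurable_of_continuousOn_of_ae_mem hg measurableSet_Icc hlam)
    (hlam.mono hA) (hlam.mono hB) hM hδ a

theorem continuousOn_relKernel (hc : ContinuousOn c (Icc s₀ s₁)) :
    ContinuousOn (Function.uncurry (relKernel c s₀)) (univ ×ˢ Icc s₀ s₁) := by
  have hcomp : ContinuousOn (fun p : ℝ × ℝ ↦ c p.2) (univ ×ˢ Icc s₀ s₁) :=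
    hc.comp continuousOn_snd fun p hp ↦ hp.2
  unfold relKernel Function.uncurry
  exact Real.continuous_exp.comp_continuousOn <|
    .add (by fun_prop) (continuousOn_fst.mul (hcomp.sub continuousOn_const))

theorem exists_gap_of_ae_lintegral_relKernel_eq (hc : AnalyticOnNhd ℝ c (Icc s₀ s₁))
    (hlam : ∀ᵐ s ∂lam, s ∈ Icc s₀ s₁) (hδ : 0 < δ) {a : ℝ} (hν : ∀ᵐ θ ∂ν, a ≤ θ)
    (hslack : ∀ᵐ θ ∂ν, ∫⁻ s, ENNReal.ofReal (relKernel c s₀ θ s) ∂lam =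
      ENNReal.ofReal (Real.exp (-(δ * θ)))) :
    ∃ η > 0, ∀ᵐ θ ∂ν, θ = a ∨ a + η ≤ θ := by
  have hne := eventually_integral_relKernel_ne hc hlam hδ a
  obtain ⟨u, hu, hIoo⟩ := (nhdsGT_basis a).eventually_iff.1
    (hne.filter_mono (nhdsWithin_mono a fun θ hθ ↦ (ne_of_gt hθ : θ ≠ a)))
  refine ⟨u - a, sub_pos.2 hu, ?_⟩
  filter_upwards [hν, hslack] with θ hθ heq
  by_contra! hgap
  refine hIoo ⟨hθ.lt_of_ne' hgap.1, by linarith [hgap.2]⟩ ?_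
  have hcont : ContinuousOn (relKernel c s₀ θ) (Icc s₀ s₁) :=
    (continuousOn_relKernel hc.continuousOn).comp (f := fun s ↦ (θ, s)) (by fun_prop)
      fun s hs ↦ ⟨mem_univ _, hs⟩
  exact integral_eq_of_lintegral_ofReal_eq (ae_of_all _ fun s ↦ (relKernel_pos _ _ _ _).le)
    (aestronglyMeasurable_of_continuousOn_of_ae_mem hcont measurableSet_Icc hlam)
    (Real.exp_nonneg _) heq

theorem exists_ae_le_of_complementary_slackness {b : ℝ → ℝ} (hb : AnalyticAt ℝ b 0)
    (hb₀ : 0 < b 0) (hc : AnalyticOnNhd ℝ (inverseTime b) (Ici s₀)) [IsFiniteMeasure ν]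
    (hν : ∀ᵐ θ ∂ν, 2 * b 0 ≤ θ) (hlam : ∀ᵐ s ∂lam, s ∈ Icc s₀ s₁) (hδ : 0 < δ)
    (hslackν : ∀ᵐ s ∂lam, ∫⁻ θ, ENNReal.ofReal (relKernel (inverseTime b) s₀ θ s) ∂ν = 1)
    (hslacklam : ∀ᵐ θ ∂ν, ∫⁻ s, ENNReal.ofReal (relKernel (inverseTime b) s₀ θ s) ∂lam =
      ENNReal.ofReal (Real.exp (-(δ * θ)))) :
    ∃ N, ∀ᵐ θ ∂ν, θ ≤ N := by
  by_contra! hunbdd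
  have hfreq : ∃ᶠ θ in atTop, ∫⁻ s, ENNReal.ofReal (relKernel (inverseTime b) s₀ θ s) ∂lam =
      ENNReal.ofReal (Real.exp (-(δ * θ))) := frequently_atTop.2 fun N ↦
    let ⟨θ, hθ, heq⟩ := (hunbdd N |>.and_eventually hslacklam).exists
    ⟨θ, hθ.le, heq⟩
  have hcIcc := hc.mono (Icc_subset_Ici_self : Icc s₀ s₁ ⊆ _)
  have hatom := measure_singleton_eq_zero_of_frequently_lintegral_relKernel_le hδ
    (hfreq.mono fun _ h ↦ h.le)
  have hone := frequently_integral_relKernel_eq_one hcIcc hlam hatom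
    (hfreq.mono fun _ h ↦ h.ge) hslackν
  obtain ⟨η, hη, hgap⟩ := exists_gap_of_ae_lintegral_relKernel_eq hcIcc hlam hδ hν hslacklam
  have hconc := ae_eq_of_integral_relKernel_eq_one hb hb₀ hη hgap fun s hs ↦
    integral_relKernel_eq_one_of_frequently hc (hν.mono fun θ hθ ↦ by linarith) hone hs
  exact hunbdd (2 * b 0) (hconc.mono fun θ hθ ↦ hθ.le.not_gt)

end BoundedSupport

section OptimalPair

variable {c : ℝ → ℝ} {s₀ s₁ s δ : ℝ}

theorem tendsto_relKernel_atTop (hs : s₀ < s) :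
    Tendsto (fun θ ↦ relKernel c s₀ θ s) atTop (𝓝 0) := by
  have hquad : Tendsto (fun θ : ℝ ↦ θ * (c s - c s₀ - (s - s₀) / 2 * θ)) atTop atBot :=
    tendsto_id.atTop_mul_atBot₀ <| tendsto_atBot_add_const_left _ _ <|
      tendsto_neg_atTop_atBot.comp (tendsto_id.const_mul_atTop (by linarith))
  refine (Real.tendsto_exp_atBot.comp hquad).congr fun θ ↦ ?_
  rw [Function.comp_apply, relKernel]
  congr 1
  ring

theorem tendsto_subtypeVal_Ici_cocompact (a : ℝ) :
    Tendsto ((↑) : Ici a → ℝ) (cocompact _) atTop := tendsto_atTop.2 fun N ↦ by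
  have hcompact : IsCompact ((↑) ⁻¹' Icc a N : Set (Ici a)) :=
    isClosed_Ici.isClosedEmbedding_subtypeVal.isCompact_preimage isCompact_Icc
  exact mem_of_superset hcompact.compl_mem_cocompact fun θ hθ ↦
    (not_le.1 fun hle ↦ hθ ⟨θ.2, hle⟩).le

theorem tendsto_toNNReal_relKernel_cocompact {a : ℝ} (hs : s₀ ≤ s) :
    Tendsto (fun θ : Ici a ↦ (relKernel c s₀ θ s).toNNReal) (cocompact _)
      (𝓝 (if s = s₀ then 1 else 0)) := by
  split_ifs with heq
  · simpa [heq, relKernel] using tendsto_const_nhds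
  · simpa [Function.comp_def] using
      (tendsto_real_toNNReal (tendsto_relKernel_atTop (hs.lt_of_ne' heq))).comp
        (tendsto_subtypeVal_Ici_cocompact a)

theorem exists_optimal_measures_relKernel (hc : ContinuousOn c (Icc s₀ s₁)) (hs : s₀ ≤ s₁)
    (hδ : 0 < δ) (a : ℝ) : ∃ ν lam : Measure ℝ, IsFiniteMeasure ν ∧ IsFiniteMeasure lam ∧
      (∀ᵐ θ ∂ν, a ≤ θ) ∧ (∀ᵐ s ∂lam, s ∈ Icc s₀ s₁) ∧
      (∀ s ∈ Icc s₀ s₁, ∫⁻ θ, ENNReal.ofReal (relKernel c s₀ θ s) ∂ν ≤ 1) ∧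
      (∀ θ ≥ a, ENNReal.ofReal (Real.exp (-(δ * θ))) ≤
        ∫⁻ s, ENNReal.ofReal (relKernel c s₀ θ s) ∂lam) ∧
      lam univ = ∫⁻ θ, ENNReal.ofReal (Real.exp (-(δ * θ))) ∂ν := by
  have hkX (s : ℝ) : Continuous fun θ : Ici a ↦ (relKernel c s₀ θ s).toNNReal :=
    continuous_real_toNNReal.comp ((continuous_relKernel_left c s₀ s).comp continuous_subtype_val)
  have hkY (θ : ℝ) : Continuous fun s : Icc s₀ s₁ ↦ (relKernel c s₀ θ s).toNNReal :=
    continuous_real_toNNReal.comp <| (continuousOn_relKernel hc).comp_continuous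
      (f := fun s : Icc s₀ s₁ ↦ (θ, (s : ℝ))) (by fun_prop) fun s ↦ ⟨mem_univ _, s.2⟩
  have hexp : Tendsto (fun θ : Ici a ↦ (Real.exp (-(δ * θ))).toNNReal) (cocompact _) (𝓝 0) := by
    simpa using tendsto_real_toNNReal <| Real.tendsto_exp_neg_atTop_nhds_zero.comp
      ((tendsto_subtypeVal_Ici_cocompact a).const_mul_atTop hδ)
  have : LocallyCompactSpace (Ici a) := isClosed_Ici.locallyCompactSpace
  obtain ⟨ν, lam, hν, hlam, hpack, hcover, hval⟩ := exists_optimal_measures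
    (fun s : Icc s₀ s₁ ↦ hkX s) (fun s ↦ tendsto_toNNReal_relKernel_cocompact s.2.1)
    (fun θ ↦ hkY θ) (by fun_prop) hexp
    (y₀ := ⟨s₀, left_mem_Icc.2 hs⟩) (fun θ ↦ Real.toNNReal_pos.2 (relKernel_pos _ _ _ _)) (by simp)
  have hembX := MeasurableEmbedding.subtype_coe (measurableSet_Ici (a := a))
  have hembY := MeasurableEmbedding.subtype_coe (measurableSet_Icc (a := s₀) (b := s₁))
  refine ⟨ν.map Subtype.val, lam.map Subtype.val, inferInstance, inferInstance,
    hembX.ae_map_iff.2 (ae_of_all _ fun θ ↦ θ.2), hembY.ae_map_iff.2 (ae_of_all _ fun s ↦ s.2),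
    fun s hs ↦ ?_, fun θ hθ ↦ ?_, ?_⟩
  · exact (hembX.lintegral_map _).trans_le (hpack ⟨s, hs⟩)
  · exact (hcover ⟨θ, hθ⟩).trans (hembY.lintegral_map _).ge
  · rw [hembX.lintegral_map, Measure.map_apply measurable_subtype_coe .univ]
    exact hval

theorem aemeasurable_uncurry_ofReal_of_continuousOn {X Y : Type*} [TopologicalSpace X]
    [MeasurableSpace X] [TopologicalSpace Y] [MeasurableSpace Y] [OpensMeasurableSpace (X × Y)]
    {ν : Measure X} {lam : Measure Y} [SFinite lam] {F : X → Y → ℝ} {K : Set Y}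
    (hF : ContinuousOn (Function.uncurry F) (univ ×ˢ K)) (hK : MeasurableSet K)
    (hlam : ∀ᵐ y ∂lam, y ∈ K) :
    AEMeasurable (Function.uncurry fun x y ↦ ENNReal.ofReal (F x y)) (ν.prod lam) :=
  (aestronglyMeasurable_of_continuousOn_of_ae_mem hF (MeasurableSet.univ.prod hK)
    ((Measure.quasiMeasurePreserving_snd.ae hlam).mono fun _ h ↦
      ⟨mem_univ _, h⟩)).aemeasurable.ennreal_ofReal

theorem exists_optimal_measures_relKernel_inverseTime {b : ℝ → ℝ} (hb : AnalyticAt ℝ b 0)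
    (hb₀ : 0 < b 0) (hc : AnalyticOnNhd ℝ (inverseTime b) (Ici s₀)) (hs : s₀ ≤ s₁) (hδ : 0 < δ) :
    ∃ (ν lam : Measure ℝ) (N : ℝ), IsFiniteMeasure ν ∧ IsFiniteMeasure lam ∧
      (∀ᵐ θ ∂ν, θ ∈ Icc (2 * b 0) N) ∧ (∀ᵐ s ∂lam, s ∈ Icc s₀ s₁) ∧
      (∀ s ∈ Icc s₀ s₁, ∫⁻ θ, ENNReal.ofReal (relKernel (inverseTime b) s₀ θ s) ∂ν ≤ 1) ∧
      (∀ θ ≥ 2 * b 0, ENNReal.ofReal (Real.exp (-(δ * θ))) ≤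
        ∫⁻ s, ENNReal.ofReal (relKernel (inverseTime b) s₀ θ s) ∂lam) ∧
      lam univ = ∫⁻ θ, ENNReal.ofReal (Real.exp (-(δ * θ))) ∂ν := by
  have hcont : ContinuousOn (inverseTime b) (Icc s₀ s₁) :=
    hc.continuousOn.mono Icc_subset_Ici_self
  obtain ⟨ν, lam, hνfin, hlamfin, hν, hlam, hpack, hcover, hval⟩ :=
    exists_optimal_measures_relKernel hcont hs hδ (2 * b 0)
  obtain ⟨hslackν, hslacklam⟩ := complementary_slackness
    (aemeasurable_uncurry_ofReal_of_continuousOn (continuousOn_relKernel hcont) measurableSet_Icc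
      hlam) (hlam.mono hpack) (hν.mono hcover) hval.le
  obtain ⟨N, hN⟩ :=
    exists_ae_le_of_complementary_slackness hb hb₀ hc hν hlam hδ hslackν hslacklam
  exact ⟨ν, lam, N, hνfin, hlamfin, hν.and hN, hlam, hpack, hcover, hval⟩

end OptimalPair

section Admissible

variable {b : ℝ → ℝ} {t₀ x₀ ε : ℝ}

theorem rTheta_pos (θ t x : ℝ) : 0 < rTheta θ t x := Real.exp_pos _

theorem continuous_rTheta_left (t x : ℝ) : Continuous fun θ ↦ rTheta θ t x := by
  unfold rTheta
  fun_prop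

theorem rTheta_eq_mul_relKernel (b : ℝ → ℝ) (t₀ θ t : ℝ) : rTheta θ t (b t) =
    rTheta θ t₀ (b t₀) * relKernel (inverseTime b) t₀⁻¹ θ t⁻¹ := by
  simp only [rTheta, relKernel, inverseTime, inv_inv, ← Real.exp_add]
  ring_nf

theorem rTheta_eq_mul_exp (θ t x y : ℝ) :
    rTheta θ t x = rTheta θ t y * Real.exp (-((y - x) / t * θ)) := by
  rw [rTheta, rTheta, ← Real.exp_add]
  ring_nf

theorem lintegral_withDensity_inv_mul {α : Type*} [MeasurableSpace α] {μ : Measure α} {w : α → ℝ}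
    (hw : Measurable w) (hpos : ∀ x, 0 < w x) (f : α → ℝ) :
    ∫⁻ x, ENNReal.ofReal (w x * f x) ∂μ.withDensity (fun x ↦ ENNReal.ofReal (w x)⁻¹) =
      ∫⁻ x, ENNReal.ofReal (f x) ∂μ := by
  have hdensity : Measurable fun x ↦ ENNReal.ofReal (w x)⁻¹ := hw.inv.ennreal_ofReal
  rw [lintegral_withDensity_eq_lintegral_mul_non_measurable _ hdensity
    (ae_of_all _ fun _ ↦ ENNReal.ofReal_lt_top)]
  refine lintegral_congr fun x ↦ ?_
  rw [Pi.mul_apply, ← ENNReal.ofReal_mul (inv_nonneg.2 (hpos x).le),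
    inv_mul_cancel_left₀ (hpos x).ne']

theorem isFiniteMeasure_withDensity_ofReal_of_continuous {μ : Measure ℝ} [IsFiniteMeasure μ]
    {f : ℝ → ℝ} (hf : Continuous f) {m N : ℝ} (hμ : ∀ᵐ x ∂μ, x ∈ Icc m N) :
    IsFiniteMeasure (μ.withDensity fun x ↦ ENNReal.ofReal (f x)) := by
  obtain ⟨C, hC⟩ := isCompact_Icc.exists_bound_of_continuousOn (hf.continuousOn (s := Icc m N))
  exact isFiniteMeasure_withDensity_ofReal (.of_bounded (C := C) (hμ.mono hC))

theorem D1epsAdm.of_relKernel {ν : Measure ℝ} [IsFiniteMeasure ν] {N : ℝ} (hε : 0 < ε)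
    (hν : ∀ᵐ θ ∂ν, θ ∈ Icc (2 * b 0) N)
    (hpack : ∀ s ∈ Icc t₀⁻¹ ε⁻¹,
      ∫⁻ θ, ENNReal.ofReal (relKernel (inverseTime b) t₀⁻¹ θ s) ∂ν ≤ 1) :
    D1epsAdm b t₀ ε (ν.withDensity fun θ ↦ ENNReal.ofReal (rTheta θ t₀ (b t₀))⁻¹) := by
  have hw := continuous_rTheta_left t₀ (b t₀)
  refine ⟨isFiniteMeasure_withDensity_ofReal_of_continuous
    (hw.inv₀ fun θ ↦ (rTheta_pos _ _ _).ne') hν,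
    withDensity_absolutelyContinuous _ _ (hν.mono fun θ hθ ↦ hθ.1), fun t ht ↦ ?_⟩
  have ht₀ := hε.trans_le ht.1
  simp only [rMu, rTheta_eq_mul_relKernel b t₀ _ t]
  rw [lintegral_withDensity_inv_mul hw.measurable fun θ ↦ rTheta_pos _ _ _]
  exact hpack t⁻¹ ⟨inv_anti₀ ht₀ ht.2, inv_anti₀ hε ht.1⟩

theorem P1epsAdm.of_relKernel {lam : Measure ℝ} [IsFiniteMeasure lam] (ht₀ : 0 < t₀)
    (hlam : ∀ᵐ s ∂lam, s ∈ Icc t₀⁻¹ ε⁻¹)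
    (hcover : ∀ θ ≥ 2 * b 0, ENNReal.ofReal (Real.exp (-((b t₀ - x₀) / t₀ * θ))) ≤
      ∫⁻ s, ENNReal.ofReal (relKernel (inverseTime b) t₀⁻¹ θ s) ∂lam) :
    P1epsAdm b t₀ x₀ ε (lam.map (·⁻¹)) := by
  have hinv : MeasurableEmbedding fun s : ℝ ↦ s⁻¹ := (MeasurableEquiv.inv ℝ).measurableEmbedding
  refine ⟨inferInstance, ?_, fun θ hθ ↦ ?_⟩
  · refine hinv.ae_map_iff.2 (hlam.mono fun s hs ↦ ?_)
    have hs₀ := (inv_pos.2 ht₀).trans_le hs.1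
    exact ⟨le_inv_of_le_inv₀ hs₀ hs.2, inv_le_of_inv_le₀ ht₀ hs.1⟩
  · have hkernel (s : ℝ) : ENNReal.ofReal (rTheta θ s⁻¹ (b s⁻¹)) =
        ENNReal.ofReal (rTheta θ t₀ (b t₀)) *
          ENNReal.ofReal (relKernel (inverseTime b) t₀⁻¹ θ s) := by
      rw [← ENNReal.ofReal_mul (rTheta_pos _ _ _).le, rTheta_eq_mul_relKernel b t₀ θ s⁻¹, inv_inv]
    rw [hinv.lintegral_map, lintegral_congr hkernel,
      lintegral_const_mul' _ _ ENNReal.ofReal_ne_top, rTheta_eq_mul_exp θ t₀ x₀ (b t₀),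
      ENNReal.ofReal_mul (rTheta_pos _ _ _).le]
    exact mul_le_mul_right (hcover θ hθ) _

theorem analyticOnNhd_inverseTime (hb : AnalyticOnNhd ℝ b (Icc 0 t₀)) (ht₀ : 0 < t₀) :
    AnalyticOnNhd ℝ (inverseTime b) (Ici t₀⁻¹) := fun s hs ↦ by
  have hs₀ : 0 < s := (inv_pos.2 ht₀).trans_le hs
  have hbs : AnalyticAt ℝ b s⁻¹ := hb _ ⟨(inv_pos.2 hs₀).le, inv_le_of_inv_le₀ ht₀ hs⟩
  exact analyticAt_id.mul (hbs.comp (analyticAt_inv hs₀.ne'))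

theorem exists_admissible_measure_le_lintegral (hb : AnalyticOnNhd ℝ b (Icc 0 t₀))
    (hb₀ : 0 < b 0) (hx₀ : x₀ < b t₀) (hε : ε ∈ Ioo 0 t₀) :
    ∃ μ lam, D1epsAdm b t₀ ε μ ∧ P1epsAdm b t₀ x₀ ε lam ∧
      lam univ ≤ ∫⁻ θ, ENNReal.ofReal (rTheta θ t₀ x₀) ∂μ := by
  have ht₀ := hε.1.trans hε.2
  obtain ⟨ν, lam, N, hνfin, hlamfin, hν, hlam, hpack, hcover, hval⟩ :=
    exists_optimal_measures_relKernel_inverseTime (hb 0 (left_mem_Icc.2 ht₀.le)) hb₀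
      (analyticOnNhd_inverseTime hb ht₀) (inv_anti₀ hε.1 hε.2.le)
      (div_pos (sub_pos.2 hx₀) ht₀)
  refine ⟨_, _, .of_relKernel hε.1 hν hpack, .of_relKernel ht₀ hlam hcover, ?_⟩
  simp only [rTheta_eq_mul_exp _ t₀ x₀ (b t₀)]
  rw [lintegral_withDensity_inv_mul (continuous_rTheta_left _ _).measurable
    fun θ ↦ rTheta_pos _ _ _, Measure.map_apply measurable_inv .univ]
  exact hval.le

end Admissible

section Duality

variable {b : ℝ → ℝ} {t₀ x₀ ε : ℝ} {μ lam : Measure ℝ}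

theorem aemeasurable_uncurry_ofReal_rTheta (hb : ContinuousOn b (Icc ε t₀)) (hε : 0 < ε)
    [SFinite lam] (hlam : ∀ᵐ t ∂lam, t ∈ Icc ε t₀) :
    AEMeasurable (Function.uncurry fun θ t ↦ ENNReal.ofReal (rTheta θ t (b t))) (μ.prod lam) := by
  refine aemeasurable_uncurry_ofReal_of_continuousOn ?_ measurableSet_Icc hlam
  have hbsnd : ContinuousOn (fun p : ℝ × ℝ ↦ b p.2) (univ ×ˢ Icc ε t₀) :=
    hb.comp continuousOn_snd fun p hp ↦ hp.2
  have hne (p : ℝ × ℝ) (hp : p ∈ univ ×ˢ Icc ε t₀) : p.2 ≠ 0 := (hε.trans_le hp.2.1).ne'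
  exact (((continuousOn_fst.pow 2).neg.div (continuousOn_const.mul continuousOn_snd)
    fun p hp ↦ mul_ne_zero two_ne_zero (hne p hp)).add
      ((continuousOn_fst.mul hbsnd).div continuousOn_snd hne)).rexp

theorem P1epsAdm.measure_Icc (hlam : P1epsAdm b t₀ x₀ ε lam) : lam (Icc ε t₀) = lam univ :=
  measure_eq_measure_of_null_sdiff (subset_univ _) (by simpa [← compl_eq_univ_sdiff] using hlam.2.1)

theorem D1epsAdm.lintegral_le_measure_Icc (hμ : D1epsAdm b t₀ ε μ) (hlam : P1epsAdm b t₀ x₀ ε lam)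
    (hb : ContinuousOn b (Icc ε t₀)) (hε : 0 < ε) :
    ∫⁻ θ, ENNReal.ofReal (rTheta θ t₀ x₀) ∂μ ≤ lam (Icc ε t₀) := by
  have := hμ.1
  have := hlam.1
  rw [hlam.measure_Icc]
  exact lintegral_le_measure_univ_of_feasible
    (aemeasurable_uncurry_ofReal_rTheta hb hε hlam.2.1) (mem_of_superset hlam.2.1 hμ.2.2)
    (mem_of_superset hμ.2.1 hlam.2.2)

theorem D1epsAdm.complementary_slackness (hμ : D1epsAdm b t₀ ε μ) (hlam : P1epsAdm b t₀ x₀ ε lam)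
    (hb : ContinuousOn b (Icc ε t₀)) (hε : 0 < ε)
    (hgap : lam univ ≤ ∫⁻ θ, ENNReal.ofReal (rTheta θ t₀ x₀) ∂μ) :
    (∀ᵐ t ∂lam, rMu μ t (b t) = 1) ∧
      ∀ᵐ θ ∂μ, ∫⁻ t, ENNReal.ofReal (rTheta θ t (b t)) ∂lam = ENNReal.ofReal (rTheta θ t₀ x₀) := by
  have := hμ.1
  have := hlam.1
  exact _root_.complementary_slackness (aemeasurable_uncurry_ofReal_rTheta hb hε hlam.2.1)
    (mem_of_superset hlam.2.1 hμ.2.2) (mem_of_superset hμ.2.1 hlam.2.2) hgap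

end Duality

theorem stmt_8_general (b : ℝ → ℝ) (t0 x0 : ℝ) (hba : AnalyticOnNhd ℝ b (Set.Icc 0 t0))
    (hb0 : 0 < b 0) (hx0 : x0 < b t0) :
    ∀ ε ∈ Set.Ioo 0 t0,
      ∃ (μ1 lam1 : Measure ℝ), D1epsAdm b t0 ε μ1 ∧ P1epsAdm b t0 x0 ε lam1 ∧
        (∫⁻ θ, ENNReal.ofReal (rTheta θ t0 x0) ∂μ1)
          = (⨆ μ ∈ {μ : Measure ℝ | D1epsAdm b t0 ε μ},
              ∫⁻ θ, ENNReal.ofReal (rTheta θ t0 x0) ∂μ) ∧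
        (⨆ μ ∈ {μ : Measure ℝ | D1epsAdm b t0 ε μ},
            ∫⁻ θ, ENNReal.ofReal (rTheta θ t0 x0) ∂μ)
          = (⨅ lam ∈ {lam : Measure ℝ | P1epsAdm b t0 x0 ε lam}, lam (Set.Icc ε t0)) ∧
        (⨅ lam ∈ {lam : Measure ℝ | P1epsAdm b t0 x0 ε lam}, lam (Set.Icc ε t0))
          = lam1 (Set.Icc ε t0) ∧
        (∀ᵐ t ∂lam1, rMu μ1 t (b t) = 1) ∧
        (∀ᵐ θ ∂μ1, (∫⁻ t, ENNReal.ofReal (rTheta θ t (b t)) ∂lam1)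
          = ENNReal.ofReal (rTheta θ t0 x0)) := by
  intro ε hε
  obtain ⟨μ1, lam1, hμ1, hlam1, hgap⟩ := exists_admissible_measure_le_lintegral hba hb0 hx0 hε
  have hcont : ContinuousOn b (Icc ε t0) := hba.continuousOn.mono (Icc_subset_Icc_left hε.1.le)
  have hweak {μ lam : Measure ℝ} (hμ : D1epsAdm b t0 ε μ) (hlam : P1epsAdm b t0 x0 ε lam) :=
    hμ.lintegral_le_measure_Icc hlam hcont hε.1
  have hval : ∫⁻ θ, ENNReal.ofReal (rTheta θ t0 x0) ∂μ1 = lam1 (Icc ε t0) :=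
    (hweak hμ1 hlam1).antisymm (hlam1.measure_Icc.trans_le hgap)
  have hsup : ⨆ μ ∈ {μ : Measure ℝ | D1epsAdm b t0 ε μ},
      ∫⁻ θ, ENNReal.ofReal (rTheta θ t0 x0) ∂μ = lam1 (Icc ε t0) :=
    le_antisymm (iSup₂_le fun μ hμ ↦ hweak hμ hlam1) <|
      hval.ge.trans (le_biSup (fun μ ↦ ∫⁻ θ, ENNReal.ofReal (rTheta θ t0 x0) ∂μ) hμ1)
  have hinf : ⨅ lam ∈ {lam : Measure ℝ | P1epsAdm b t0 x0 ε lam}, lam (Icc ε t0) =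
      lam1 (Icc ε t0) :=
    (biInf_le (fun lam : Measure ℝ ↦ lam (Icc ε t0)) hlam1).antisymm <|
      le_iInf₂ fun lam hlam ↦ hval.ge.trans (hweak hμ1 hlam)
  exact ⟨μ1, lam1, hμ1, hlam1, hval.trans hsup.symm, hsup.trans hinf.symm, hinf,
    hμ1.complementary_slackness hlam1 hcont hε.1 hgap⟩

theorem stmt_8 (b : ℝ → ℝ)
    (hba : AnalyticOnNhd ℝ b (Set.Ici 0)) (hbconc : ConcaveOn ℝ (Set.Ici 0) b)
    (hb0 : 0 < b 0) (hbderiv : ∃ d : ℝ, HasDerivWithinAt b d (Set.Ici 0) 0)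
    (t0 x0 : ℝ) (ht0 : 0 < t0) (hx0 : x0 < b t0) :
    ∀ ε ∈ Set.Ioo 0 t0,
      ∃ (μ1 lam1 : Measure ℝ), D1epsAdm b t0 ε μ1 ∧ P1epsAdm b t0 x0 ε lam1 ∧
        (∫⁻ θ, ENNReal.ofReal (rTheta θ t0 x0) ∂μ1)
          = (⨆ μ ∈ {μ : Measure ℝ | D1epsAdm b t0 ε μ},
              ∫⁻ θ, ENNReal.ofReal (rTheta θ t0 x0) ∂μ) ∧
        (⨆ μ ∈ {μ : Measure ℝ | D1epsAdm b t0 ε μ},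
            ∫⁻ θ, ENNReal.ofReal (rTheta θ t0 x0) ∂μ)
          = (⨅ lam ∈ {lam : Measure ℝ | P1epsAdm b t0 x0 ε lam}, lam (Set.Icc ε t0)) ∧
        (⨅ lam ∈ {lam : Measure ℝ | P1epsAdm b t0 x0 ε lam}, lam (Set.Icc ε t0))
          = lam1 (Set.Icc ε t0) ∧
        (∀ᵐ t ∂lam1, rMu μ1 t (b t) = 1) ∧
        (∀ᵐ θ ∂μ1, (∫⁻ t, ENNReal.ofReal (rTheta θ t (b t)) ∂lam1)
          = ENNReal.ofReal (rTheta θ t0 x0)) :=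
  stmt_8_general b t0 x0 (hba.mono Icc_subset_Ici_self) hb0 hx0
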